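/- Let Ω ⊂ ℝ^d be a bounded, connected, open set admitting the relative isoperimetric inequality, let p ≥ 1, let 𝒜 be a family of pairs of C¹ coefficients, each admissible with the same constant κ, and let M > 0 satisfy M > u_{I,i}(x) for every (A,m) ∈ 𝒜, every x ∈ Ω̄, every I ⊆ {1,…,N} and every coordinate i, where u_I(x) ∈ ℝ^N is the unique solution of the linear system u_i = 0 (i ∈ I), m_j(x) − Σ_k a_{jk}(x) u_k = 0 (j ∉ I). Let U ⊆ C¹(Ω̄; ℝ^N) be such that: (i) u ≥ 0 on Ω for every u ∈ U; (ii) one cannot choose a sequence (u_n) ⊆ U bounded in L^p(Ω; ℝ^N), a sequence ((A_n, m_n)) ⊆ 𝒜, and a nonempty index set I ⊆ {1,…,N} such that u_{in} → 0 in measure on Ω for every i ∈ I and f_{in} → 0 in measure on Ω for every i ∉ I, where f_{in}(x) = m_{i,n}(x) − Σ_j a_{ij,n}(x) u_{jn}(x). Then there exists C > 0 (depending on Ω, p, κ, 𝒜, U) such that for every u ∈ U and every (A, m) ∈ 𝒜, ∫_Ω Σ_{i=1}^N |f_i(x)|^p dx ≤ C ∫_Ω Σ_{i=1}^N ũ_i(x)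 (|f_i(x)|^p + |∇f_i(x)|^p) dx, where f_i(x) = m_i(x) − Σ_j a_{ij}(x) u_j(x), ũ_i(x) = min(u_i(x), M), and the right-hand side may be infinite. -/

import Mathlib

/-!
Positivity of the principal and bordered minors says that, for `u ≥ 0` and `f(u) ≥ 0`, the numbers
`u_i` and `f_i` never vanish together. By compactness of the set of admissible coefficients this
separation is quantitative, and survives for `f ≥ -c`. Hence each truncated function
`min(f_i - c/2, min_j (f_j + c))` varies only where some `u_j` and `|f_j|` are bounded below, so
that the co-area inequality and the isoperimetric inequality bound, by a multiple of the weighted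
energy `r`, the smaller of the measures of the phases `{f ≥ -c/2, f_i ≥ c}` and `{f_i ≤ c/2}`.

Let `I` be the set of the `i` whose first phase has measure much larger than `r`. If `I` is empty,
then all the `u_i` are bounded below off a set of measure `O(r)`, and the inequality follows. If `I`
is not empty, then, up to sets of measure `O(r)`, `u_i` is close to zero for `i ∈ I` and `f_i` is
close to zero for `i ∉ I`. In this case `r` cannot be arbitrarily small, by the assumption on `U`,
and once `r` is bounded below the inequality follows from the growth of `f`.
-/

open MeasureTheory Filter

/-- Principal minor of `A` over the index set `I`. -/
noncomputable def minorP {N : ℕ} (A : Matrix (Fin N) (Fin N) ℝ) (I : Finset (Fin N)) : ℝ :=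
  Matrix.det (Matrix.of fun i j : {x : Fin N // x ∈ I} => A i.1 j.1)

/-- The determinant `Δ_{I,j}` obtained by bordering the principal minor over `I`
with the column `m` and the row `j`. -/
noncomputable def minorM {N : ℕ} (A : Matrix (Fin N) (Fin N) ℝ) (m : Fin N → ℝ)
    (I : Finset (Fin N)) (j : Fin N) : ℝ :=
  Matrix.det (Matrix.of fun k l : Option {x : Fin N // x ∈ I} =>
    match k, l with
    | some k', some l' => A k'.1 l'.1
    | some k', none => m k'.1
    | none, some l' => A j l'.1
    | none, none => m j)

/-- An admissible pair of coefficients with constant `κ`: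
entries of `A` and `m` bounded by `1/κ`, all principal minors `Δ_I ≥ κ`,
and all bordered determinants `Δ_{I,j} ≥ κ` for `j ∉ I`. -/
def IsAdmissible {N : ℕ} (κ : ℝ) (A : Matrix (Fin N) (Fin N) ℝ) (m : Fin N → ℝ) : Prop :=
  (∀ i j, |A i j| ≤ 1 / κ) ∧ (∀ i, m i ≤ 1 / κ) ∧
    (∀ I : Finset (Fin N), κ ≤ minorP A I) ∧
    (∀ I : Finset (Fin N), ∀ j ∉ I, κ ≤ minorM A m I j)

/-- `f_i(u) = m_i − Σ_j a_{ij} u_j`. -/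
def fComp {N : ℕ} (A : Matrix (Fin N) (Fin N) ℝ) (m : Fin N → ℝ) (u : Fin N → ℝ)
    (i : Fin N) : ℝ :=
  m i - ∑ j, A i j * u j

/-! ### Principal and bordered minors -/

section Minors

variable {N : ℕ}

theorem fComp_eq_sub_mulVec (A : Matrix (Fin N) (Fin N) ℝ) (m u : Fin N → ℝ) :
    fComp A m u = m - A.mulVec u :=
  rfl

theorem minorM_eq_det_fromBlocks (A : Matrix (Fin N) (Fin N) ℝ) (m : Fin N → ℝ)
    (S : Finset (Fin N)) (j : Fin N) :
    minorM A m S j =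
      (Matrix.fromBlocks (Matrix.of fun k l : {x // x ∈ S} => A k l)
        (Matrix.of fun (k : {x // x ∈ S}) (_ : PUnit.{1}) => m k)
        (Matrix.of fun (_ : PUnit.{1}) (l : {x // x ∈ S}) => A j l)
        (Matrix.of fun _ _ : PUnit.{1} => m j)).det := by
  rw [minorM, ← Matrix.det_reindex_self (Equiv.optionEquivSumPUnit.{0} {x // x ∈ S})]
  congr 1
  ext (k | k) (_ | _) <;> simp

theorem minorP_insert (A : Matrix (Fin N) (Fin N) ℝ) {S : Finset (Fin N)} {i : Fin N}
    (hi : i ∉ S) : minorP A (insert i S) = minorM A (fun k => A k i) S i := by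
  rw [minorP, minorM, ← Matrix.det_reindex_self (Finset.subtypeInsertEquivOption hi)]
  congr 1
  ext (_ | k) (_ | l) <;> simp [Finset.subtypeInsertEquivOption]

/-- The bordered minors are the values of `f` at the solutions of the degenerate systems, by the
Schur complement formula. -/
theorem exists_fComp_eq_zero_on (A : Matrix (Fin N) (Fin N) ℝ) (m : Fin N → ℝ)
    {S : Finset (Fin N)} (hS : minorP A S ≠ 0) :
    ∃ v : Fin N → ℝ, (∀ k ∉ S, v k = 0) ∧ (∀ k ∈ S, fComp A m v k = 0) ∧
      ∀ j, minorM A m S j = minorP A S * fComp A m v j := by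
  set P : Matrix {x // x ∈ S} {x // x ∈ S} ℝ := Matrix.of fun k l => A k l with hP
  have hPu : IsUnit P.det := isUnit_iff_ne_zero.2 hS
  set w : {x // x ∈ S} → ℝ := P⁻¹.mulVec fun k => m k with hw
  set v : Fin N → ℝ := Function.extend Subtype.val w 0
  have hv : ∀ k ∉ S, v k = 0 := fun k hk => Function.extend_apply' _ _ _ (by simpa using hk)
  have hvw : ∀ l : {x // x ∈ S}, v l = w l := Subtype.val_injective.extend_apply w 0
  have hAv : ∀ i, A.mulVec v i = ∑ l : {x // x ∈ S}, A i l * w l := fun i => by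
    refine (Fintype.sum_of_injective Subtype.val Subtype.val_injective (fun l => A i l * w l)
      (fun k => A i k * v k) (fun k hk => ?_) fun l => by rw [hvw]).symm
    rw [hv k (by simpa using hk), mul_zero]
  refine ⟨v, hv, fun k hk => ?_, fun j => ?_⟩
  · have hsol : P.mulVec w = fun k : {x // x ∈ S} => m k := by
      rw [hw, Matrix.mulVec_mulVec, Matrix.mul_nonsing_inv _ hPu, Matrix.one_mulVec]
    rw [fComp_eq_sub_mulVec, Pi.sub_apply, hAv, sub_eq_zero]
    exact (congrFun hsol ⟨k, hk⟩).symm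
  · let _ : Invertible P := Matrix.invertibleOfIsUnitDet P hPu
    rw [minorM_eq_det_fromBlocks, ← hP, Matrix.det_fromBlocks₁₁,
      Matrix.det_unique (n := PUnit), Matrix.invOf_eq_nonsing_inv, Matrix.mul_assoc,
      fComp_eq_sub_mulVec, Pi.sub_apply, hAv]
    rfl

/-- Moving from `w` in the direction `-z`, stop at the first time a coordinate vanishes. -/
theorem exists_support_sub_smul_ssubset {ι 𝕜 : Type*} [Finite ι] [Field 𝕜] [LinearOrder 𝕜]
    [IsStrictOrderedRing 𝕜] {w z : ι → 𝕜} (hw : 0 ≤ w)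
    (hzw : Function.support z ⊆ Function.support w) (hz : ∃ i, 0 < z i) :
    ∃ t : 𝕜, 0 < t ∧ 0 ≤ w - t • z ∧ Function.support (w - t • z) ⊂ Function.support w := by
  obtain ⟨i, hi, hmin⟩ := Set.exists_min_image {i | 0 < z i} (fun i => w i / z i)
    (Set.toFinite _) hz
  have hwi : 0 < w i := (hw i).lt_of_ne' (hzw hi.ne')
  refine ⟨w i / z i, div_pos hwi hi, fun k => ?_, fun k hk => ?_, fun hsub => ?_⟩
  · have hwk : 0 ≤ w k := hw k
    rcases le_or_gt (z k) 0 with hk | hk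
    · have : w i / z i * z k ≤ 0 := mul_nonpos_of_nonneg_of_nonpos (div_pos hwi hi).le hk
      simpa using this.trans hwk
    · simpa using (le_div_iff₀ hk).1 (hmin k hk)
  · by_contra hwk
    have hzk : z k = 0 := by_contra fun h => hwk (hzw h)
    exact hk (by simp [Function.notMem_support.1 hwk, hzk])
  · exact hsub hwi.ne' (by simp [div_mul_cancel₀ _ hi.ne'])

theorem exists_mulVec_nonneg_on {A : Matrix (Fin N) (Fin N) ℝ} (hA : ∀ S, 0 < minorP A S)
    {S : Finset (Fin N)} {i : Fin N} (hi : i ∈ S) :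
    ∃ z : Fin N → ℝ, (∀ k ∉ S, z k = 0) ∧ z i = 1 ∧ (∀ k ∈ S, 0 ≤ A.mulVec z k) ∧
      0 < A.mulVec z i := by
  obtain ⟨v, hv, hvS, hdet⟩ :=
    exists_fComp_eq_zero_on A (fun k => A k i) (hA (S.erase i)).ne'
  have hAz : A.mulVec (Pi.single i 1 - v) = fComp A (fun k => A k i) v := by
    rw [Matrix.mulVec_sub, Matrix.mulVec_single_one]
    rfl
  have hpos : 0 < fComp A (fun k => A k i) v i := by
    have h := hA (insert i (S.erase i))
    rw [minorP_insert A (Finset.notMem_erase i S), hdet] at h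
    exact (pos_iff_pos_of_mul_pos h).1 (hA _)
  refine ⟨Pi.single i 1 - v, fun k hk => ?_, ?_, fun k hk => ?_, hAz ▸ hpos⟩
  · have hki : k ≠ i := fun h => hk (h ▸ hi)
    simp [hki, hv k fun h => hk (Finset.mem_of_mem_erase h)]
  · simp [hv i (Finset.notMem_erase i S)]
  · rw [hAz]
    rcases eq_or_ne k i with rfl | hki
    · exact hpos.le
    · exact (hvS k (Finset.mem_erase.2 ⟨hki, hk⟩)).ge

theorem eq_zero_of_mulVec_nonpos_on_support {A : Matrix (Fin N) (Fin N) ℝ}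
    (hA : ∀ S, 0 < minorP A S) {w : Fin N → ℝ} (hw : 0 ≤ w)
    (hAw : ∀ i, 0 < w i → A.mulVec w i ≤ 0) : w = 0 := by
  induction hn : Function.support w using WellFoundedLT.induction generalizing w with
  | ind T ih =>
    subst hn
    by_contra hne
    obtain ⟨i, hi⟩ := Function.ne_iff.1 hne
    set S := (Set.toFinite (Function.support w)).toFinset
    have hS : ∀ k, k ∈ S ↔ 0 < w k := fun k => by simpa [S] using hw k
    have hwi : 0 < w i := (hw i).lt_of_ne' hi
    obtain ⟨z, hzS, hzi, hAzS, hAzi⟩ := exists_mulVec_nonneg_on hA ((hS i).2 hwi)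
    obtain ⟨t, ht, hnonneg, hlt⟩ := exists_support_sub_smul_ssubset (z := z) hw
      (fun k hk => by_contra fun h => hk (hzS k (by simpa [S] using h))) ⟨i, by simp [hzi]⟩
    have hAt : ∀ k, A.mulVec (w - t • z) k = A.mulVec w k - t * A.mulVec z k := fun k => by
      simp [Matrix.mulVec_sub, Matrix.mulVec_smul]
    have hzero : w - t • z = 0 := ih _ hlt hnonneg (fun k hk => by
      have hwk : 0 < w k := (hw k).lt_of_ne' (hlt.1 hk.ne')
      rw [hAt]
      linarith [hAw k hwk, mul_nonneg ht.le (hAzS k ((hS k).2 hwk))]) rfl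
    have hval := hAt i
    rw [hzero, Matrix.mulVec_zero, Pi.zero_apply] at hval
    linarith [hAw i hwi, mul_pos ht hAzi]

/-- Otherwise let `v` solve `f_j(v) = 0` on the support of `u`, `v = 0` off it. The segment from `v`
through `u` is prolonged until it loses a coordinate; `f_i` is affine and positive at both ends. -/
theorem fComp_pos_of_eq_zero {A : Matrix (Fin N) (Fin N) ℝ} {m : Fin N → ℝ}
    (hA : ∀ S, 0 < minorP A S) (hm : ∀ S, ∀ j ∉ S, 0 < minorM A m S j)
    {u : Fin N → ℝ} (hu : 0 ≤ u) (hf : ∀ j, 0 < u j → 0 ≤ fComp A m u j)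
    {i : Fin N} (hi : u i = 0) : 0 < fComp A m u i := by
  induction hn : Function.support u using WellFoundedLT.induction generalizing u with
  | ind T ih =>
    subst hn
    set S := (Set.toFinite (Function.support u)).toFinset
    have hS : ∀ k, k ∈ S ↔ 0 < u k := fun k => by simpa [S] using hu k
    have hiS : i ∉ S := fun h => ((hS i).1 h).ne' hi
    obtain ⟨v, hv, hvS, hdet⟩ := exists_fComp_eq_zero_on A m (hA S).ne'
    have hfv : 0 < fComp A m v i := by
      have h := hm S i hiS
      rw [hdet] at h
      exact (pos_iff_pos_of_mul_pos h).1 (hA S)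
    have hsupp : Function.support (v - u) ⊆ Function.support u := fun k hk => by
      by_contra h
      exact hk (by simp [Function.notMem_support.1 h, hv k (by simpa [S] using h)])
    by_cases hneg : ∃ k, 0 < (v - u) k
    · obtain ⟨t, ht, hnonneg, hlt⟩ := exists_support_sub_smul_ssubset hu hsupp hneg
      have haff : ∀ k, fComp A m (u - t • (v - u)) k
          = (1 + t) * fComp A m u k - t * fComp A m v k := fun k => by
        simp only [fComp_eq_sub_mulVec, Matrix.mulVec_sub, Matrix.mulVec_smul, Pi.sub_apply,
          Pi.smul_apply, smul_eq_mul]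
        ring
      have hfar := ih _ hlt hnonneg (fun k hk => by
        have huk : 0 < u k := (hu k).lt_of_ne' (hlt.1 hk.ne')
        rw [haff, hvS k ((hS k).2 huk)]
        linarith [mul_nonneg (by positivity : 0 ≤ 1 + t) (hf k huk)]) (by simp [hi, hv i hiS]) rfl
      rw [haff] at hfar
      exact pos_of_mul_pos_right (by linarith [mul_pos ht hfv]) (by positivity : 0 ≤ 1 + t)
    · push Not at hneg
      have huv : u - v = 0 := eq_zero_of_mulVec_nonpos_on_support hA
        (fun k => by simpa using hneg k) fun k hk => by
          have hkS : k ∈ S := by_contra fun h => by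
            have huk : u k = 0 := by simpa [S] using h
            simp [huk, hv k h] at hk
          have hdiff : A.mulVec (u - v) k = fComp A m v k - fComp A m u k := by
            simp [fComp_eq_sub_mulVec, Matrix.mulVec_sub]
          rw [hdiff, hvS k hkS]
          linarith [hf k ((hS k).1 hkS)]
      rwa [sub_eq_zero.1 huv]

end Minors

/-! ### Uniform pointwise bounds by compactness -/

/-- The density `Σ_i min(u_i, M) |f_i|^p` of the zeroth-order part of the weighted energy. -/
noncomputable def weightedDensity {ι : Type*} [Fintype ι] (p M : ℝ) (u f : ι → ℝ) : ℝ :=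
  ∑ i, min (u i) M * |f i| ^ p

section WeightedDensity

variable {ι : Type*} {p M : ℝ} {u f : ι → ℝ}

theorem min_mul_rpow_nonneg (hM : 0 ≤ M) (hu : 0 ≤ u) (i : ι) : 0 ≤ min (u i) M * |f i| ^ p :=
  mul_nonneg (le_min (hu i) hM) (by positivity)

variable [Fintype ι]

theorem weightedDensity_nonneg (hM : 0 ≤ M) (hu : 0 ≤ u) : 0 ≤ weightedDensity p M u f :=
  Finset.sum_nonneg fun i _ => min_mul_rpow_nonneg hM hu i

theorem min_mul_rpow_le_weightedDensity (hp : 0 ≤ p) (hM : 0 ≤ M) (hu : 0 ≤ u) {i : ι} {a b : ℝ}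
    (hb : 0 ≤ b) (hai : a ≤ u i) (hbi : b ≤ |f i|) :
    min a M * b ^ p ≤ weightedDensity p M u f :=
  calc min a M * b ^ p
      ≤ min (u i) M * |f i| ^ p :=
        mul_le_mul (min_le_min_right M hai) (Real.rpow_le_rpow hb hbi hp) (by positivity)
          (le_min (hu i) hM)
    _ ≤ weightedDensity p M u f :=
        Finset.single_le_sum (fun j _ => min_mul_rpow_nonneg hM hu j) (Finset.mem_univ i)

end WeightedDensity

section PointwiseBounds

open scoped Topology

theorem eventually_forall_exists_le_of_isCompact {X ι : Type*} [TopologicalSpace X] {K : Set X}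
    (hK : IsCompact K) {φ : ι → X → ℝ} (hφ : ∀ i, Continuous (φ i))
    (hpos : ∀ x ∈ K, ∃ i, 0 < φ i x) :
    ∀ᶠ c in 𝓝[>] (0 : ℝ), ∀ x ∈ K, ∃ i, c ≤ φ i x := by
  refine hK.induction_on (p := fun t => ∀ᶠ c in 𝓝[>] (0 : ℝ), ∀ x ∈ t, ∃ i, c ≤ φ i x)
    (by simp) (fun s t hst ht => ht.mono fun c hc x hx => hc x (hst hx))
    (fun s t hs ht => ?_) fun x hx => ?_
  · filter_upwards [hs, ht] with c hcs hct x hx using hx.elim (hcs x) (hct x)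
  · obtain ⟨i, hi⟩ := hpos x hx
    refine ⟨{y | φ i x / 2 < φ i y}, mem_nhdsWithin_of_mem_nhds
      ((hφ i).continuousAt.eventually (lt_mem_nhds (half_lt_self hi))), ?_⟩
    filter_upwards [Ioo_mem_nhdsGT (half_pos hi)] with c hc y hy using ⟨i, (hc.2.trans hy).le⟩

variable {N : ℕ} {κ : ℝ}

theorem IsAdmissible.le_apply {A : Matrix (Fin N) (Fin N) ℝ} {m : Fin N → ℝ}
    (h : IsAdmissible κ A m) (i : Fin N) : κ ≤ m i := by
  have h0 := h.2.2.2 ∅ i (Finset.notMem_empty i)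
  rwa [minorM, Matrix.det_unique] at h0

theorem continuous_minorP (I : Finset (Fin N)) :
    Continuous fun A : Matrix (Fin N) (Fin N) ℝ => minorP A I :=
  Continuous.matrix_det (continuous_matrix fun k l => continuous_apply_apply k.1 l.1)

theorem continuous_minorM (I : Finset (Fin N)) (j : Fin N) :
    Continuous fun q : Matrix (Fin N) (Fin N) ℝ × (Fin N → ℝ) => minorM q.1 q.2 I j := by
  refine Continuous.matrix_det (continuous_matrix ?_)
  rintro (_ | k) (_ | l) <;> simp only [Matrix.of_apply] <;> fun_prop

theorem continuous_fComp (i : Fin N) :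
    Continuous fun q : (Matrix (Fin N) (Fin N) ℝ × (Fin N → ℝ)) × (Fin N → ℝ) =>
      fComp q.1.1 q.1.2 q.2 i := by
  unfold fComp
  fun_prop

theorem isCompact_setOf_isAdmissible (N : ℕ) (κ : ℝ) :
    IsCompact {q : Matrix (Fin N) (Fin N) ℝ × (Fin N → ℝ) | IsAdmissible κ q.1 q.2} := by
  have hbox : IsCompact ((Set.univ.pi fun _ : Fin N => Set.univ.pi fun _ : Fin N =>
      Set.Icc (-(1 / κ)) (1 / κ)) ×ˢ Set.univ.pi fun _ : Fin N => Set.Icc κ (1 / κ)) :=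
    (isCompact_univ_pi fun _ => isCompact_univ_pi fun _ => isCompact_Icc).prod
      (isCompact_univ_pi fun _ => isCompact_Icc)
  refine hbox.of_isClosed_subset ?_ fun q hq =>
    ⟨fun i _ j _ => abs_le.1 (hq.1 i j), fun i _ => ⟨hq.le_apply i, hq.2.1 i⟩⟩
  simp only [IsAdmissible, Set.ofPred_and, Set.ofPred_forall]
  refine .inter (isClosed_iInter fun i => isClosed_iInter fun j => isClosed_le ?_ ?_)
    (.inter (isClosed_iInter fun i => isClosed_le ?_ ?_)
      (.inter (isClosed_iInter fun I => isClosed_le ?_ ?_)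
        (isClosed_iInter fun I => isClosed_iInter fun j => isClosed_iInter fun _ =>
          isClosed_le ?_ (continuous_minorM I j)))) <;>
  try fun_prop
  exact (continuous_minorP I).comp continuous_fst

theorem IsAdmissible.minorP_pos (hκ : 0 < κ) {A : Matrix (Fin N) (Fin N) ℝ} {m : Fin N → ℝ}
    (h : IsAdmissible κ A m) (S : Finset (Fin N)) : 0 < minorP A S :=
  hκ.trans_le (h.2.2.1 S)

theorem IsAdmissible.minorM_pos (hκ : 0 < κ) {A : Matrix (Fin N) (Fin N) ℝ} {m : Fin N → ℝ}
    (h : IsAdmissible κ A m) (S : Finset (Fin N)) (j : Fin N) (hj : j ∉ S) : 0 < minorM A m S j :=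
  hκ.trans_le (h.2.2.2 S j hj)

theorem isCompact_admissible_prod_nonneg_inter (κ : ℝ) {B : Set (Fin N → ℝ)} (hB : IsCompact B) :
    IsCompact ({q : Matrix (Fin N) (Fin N) ℝ × (Fin N → ℝ) | IsAdmissible κ q.1 q.2} ×ˢ
      (Set.Ici 0 ∩ B)) :=
  (isCompact_setOf_isAdmissible N κ).prod (hB.inter_left isClosed_Ici)

theorem exists_norm_le_mulVec (hκ : 0 < κ) :
    ∃ c : ℝ, 0 < c ∧ ∀ (A : Matrix (Fin N) (Fin N) ℝ) (m u : Fin N → ℝ), IsAdmissible κ A m →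
      0 ≤ u → u ≠ 0 → ∃ i, c * ‖u‖ ≤ u i ∧ c * ‖u‖ ≤ A.mulVec u i := by
  have hpos : ∀ q ∈ {q : Matrix (Fin N) (Fin N) ℝ × (Fin N → ℝ) | IsAdmissible κ q.1 q.2} ×ˢ
      (Set.Ici 0 ∩ Metric.sphere (0 : Fin N → ℝ) 1),
      ∃ i, 0 < min (q.2 i) (q.1.1.mulVec q.2 i) := by
    rintro ⟨⟨A, m⟩, u⟩ ⟨hadm, hu, hu1⟩
    by_contra! h
    have hu0 : u = 0 := eq_zero_of_mulVec_nonpos_on_support (hadm.minorP_pos hκ) hu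
      fun i hi => (min_le_iff.1 (h i)).resolve_left hi.not_ge
    simp [hu0] at hu1
  obtain ⟨c, hc, hc0⟩ := ((eventually_forall_exists_le_of_isCompact
    (isCompact_admissible_prod_nonneg_inter κ (isCompact_sphere _ _)) (fun i => by fun_prop)
    hpos).and self_mem_nhdsWithin).exists
  refine ⟨c, hc0, fun A m u hadm hu hu0 => ?_⟩
  have hnorm : 0 < ‖u‖ := norm_pos_iff.2 hu0
  obtain ⟨i, hi⟩ := hc ((A, m), ‖u‖⁻¹ • u)
    ⟨hadm, smul_nonneg (by positivity) hu, by simp [norm_smul, hnorm.ne']⟩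
  simp only [le_min_iff, Matrix.mulVec_smul, Pi.smul_apply, smul_eq_mul, le_inv_mul_iff₀ hnorm,
    mul_comm ‖u‖] at hi
  exact ⟨i, hi⟩

variable {p M : ℝ}

theorem exists_norm_le_mul_abs_fComp (N : ℕ) (hκ : 0 < κ) :
    ∃ K : ℝ, 0 < K ∧ ∀ (A : Matrix (Fin N) (Fin N) ℝ) (m u : Fin N → ℝ), IsAdmissible κ A m →
      0 ≤ u → K < ‖u‖ → ∃ i, 1 ≤ u i ∧ fComp A m u i ≤ -1 ∧ ‖u‖ ≤ K * |fComp A m u i| := by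
  obtain ⟨c, hc, hA⟩ := exists_norm_le_mulVec (N := N) hκ
  have hK : 0 < (1 + 1 / κ) / c := by positivity
  refine ⟨(1 + 1 / κ) / c, hK, fun A m u hadm hu hKu => ?_⟩
  obtain ⟨i, hui, hAi⟩ := hA A m u hadm hu (norm_pos_iff.1 (hK.trans hKu))
  have hm := hadm.2.1 i
  have hκ' : 0 < 1 / κ := by positivity
  rw [div_lt_iff₀' hc] at hKu
  have hf : fComp A m u i ≤ 1 / κ - c * ‖u‖ := by
    rw [fComp_eq_sub_mulVec, Pi.sub_apply]
    linarith
  refine ⟨i, by linarith, by linarith, ?_⟩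
  rw [abs_of_neg (by linarith), div_mul_eq_mul_div, le_div_iff₀' hc]
  nlinarith

/-- By `fComp_pos_of_eq_zero`, the facets `u_i = 0` and `f_i = 0` of `{u ≥ 0, f ≥ 0}` are
disjoint. -/
theorem eventually_le_or_le_fComp (N : ℕ) (hκ : 0 < κ) :
    ∀ᶠ c in 𝓝[>] (0 : ℝ), ∀ (A : Matrix (Fin N) (Fin N) ℝ) (m u : Fin N → ℝ),
      IsAdmissible κ A m → 0 ≤ u → (∀ j, -c ≤ fComp A m u j) →
        ∀ i, c ≤ u i ∨ c ≤ fComp A m u i := by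
  obtain ⟨K, -, hK⟩ := exists_norm_le_mul_abs_fComp N hκ
  have hpos : ∀ i, ∀ q ∈ {q : Matrix (Fin N) (Fin N) ℝ × (Fin N → ℝ) | IsAdmissible κ q.1 q.2} ×ˢ
      (Set.Ici 0 ∩ Metric.closedBall 0 K),
      ∃ j, 0 < max (-fComp q.1.1 q.1.2 q.2 j / 2) (max (q.2 i) (fComp q.1.1 q.1.2 q.2 i)) := by
    rintro i ⟨⟨A, m⟩, u⟩ ⟨hadm, hu, -⟩
    by_contra! h
    simp only [max_le_iff] at h
    have hfi := fComp_pos_of_eq_zero (hadm.minorP_pos hκ) (hadm.minorM_pos hκ) hu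
      (fun j _ => by linarith [(h j).1]) (le_antisymm (h i).2.1 (hu i))
    exact hfi.not_ge (h i).2.2
  have hcpt := fun i => eventually_forall_exists_le_of_isCompact
    (isCompact_admissible_prod_nonneg_inter κ (isCompact_closedBall _ _))
    (fun j => ((continuous_fComp j).neg.div_const 2).max
      (Continuous.max (by fun_prop) (continuous_fComp i))) (hpos i)
  filter_upwards [eventually_all.2 hcpt, Ioo_mem_nhdsGT one_pos] with c hc hc01 A m u hadm hu hf i
  have hKu : ‖u‖ ≤ K := by
    by_contra! hKu
    obtain ⟨j, -, hj, -⟩ := hK A m u hadm hu hKu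
    linarith [hf j, hc01.2]
  obtain ⟨j, hj⟩ := hc i ((A, m), u) ⟨hadm, hu, by simpa using hKu⟩
  rcases le_max_iff.1 hj with (hj : c ≤ -fComp A m u j / 2) | hj
  · linarith [hf j, hc01.1]
  · exact le_max_iff.1 hj

/-- Where the weighted density vanishes, `f` vanishes on the support of `u`, and is positive off it
by `fComp_pos_of_eq_zero`. -/
theorem eventually_forall_weightedDensity_lt_imp_le_fComp (N : ℕ) (hp : 0 ≤ p) (hκ : 0 < κ)
    (hM : 0 < M) {c : ℝ} (hc : 0 < c) :
    ∀ᶠ η in 𝓝[>] (0 : ℝ), ∀ (A : Matrix (Fin N) (Fin N) ℝ) (m u : Fin N → ℝ),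
      IsAdmissible κ A m → 0 ≤ u → weightedDensity p M u (fComp A m u) < η →
        ∀ j, -c ≤ fComp A m u j := by
  obtain ⟨K, -, hK⟩ := exists_norm_le_mul_abs_fComp N hκ
  have hpos : ∀ j, ∀ q ∈ ({q : Matrix (Fin N) (Fin N) ℝ × (Fin N → ℝ) | IsAdmissible κ q.1 q.2} ×ˢ
      (Set.Ici 0 ∩ Metric.closedBall 0 K)) ∩ {q | fComp q.1.1 q.1.2 q.2 j ≤ -c},
      ∃ i, 0 < min (q.2 i) M * |fComp q.1.1 q.1.2 q.2 i| ^ p := by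
    rintro j ⟨⟨A, m⟩, u⟩ ⟨⟨hadm, hu, -⟩, hj : fComp A m u j ≤ -c⟩
    by_contra! h
    have hzero : ∀ i, 0 < u i → fComp A m u i = 0 := fun i hi => by
      by_contra hne
      exact (h i).not_gt (mul_pos (lt_min hi hM) (Real.rpow_pos_of_pos (abs_pos.2 hne) p))
    rcases (hu j).eq_or_lt with huj | huj
    · linarith [fComp_pos_of_eq_zero (hadm.minorP_pos hκ) (hadm.minorM_pos hκ) hu
        (fun i hi => (hzero i hi).ge) huj.symm]
    · linarith [hzero j huj]
  have hcpt := fun j => eventually_forall_exists_le_of_isCompact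
    ((isCompact_admissible_prod_nonneg_inter κ (isCompact_closedBall _ _)).inter_right
      (isClosed_le (continuous_fComp j) continuous_const))
    (fun i => Continuous.mul (by fun_prop)
      ((continuous_fComp i).abs.rpow_const fun _ => Or.inr hp)) (hpos j)
  have h1M : 0 < min 1 M := lt_min one_pos hM
  filter_upwards [eventually_all.2 hcpt, Ioo_mem_nhdsGT h1M] with η hη hη1 A m u hadm hu hdens j
  have hKu : ‖u‖ ≤ K := by
    by_contra! hKu
    obtain ⟨i, hui, hfi, -⟩ := hK A m u hadm hu hKu
    have hle := min_mul_rpow_le_weightedDensity hp hM.le hu zero_le_one hui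
      (le_abs.2 (Or.inr (le_neg_of_le_neg hfi)))
    rw [Real.one_rpow, mul_one] at hle
    linarith [hη1.2]
  by_contra! hj
  obtain ⟨i, hi⟩ := hη j ((A, m), u) ⟨⟨hadm, hu, by simpa using hKu⟩, hj.le⟩
  exact hdens.not_ge (hi.trans (Finset.single_le_sum (f := fun i => min (u i) M * _)
    (fun i _ => min_mul_rpow_nonneg hM.le hu i) (Finset.mem_univ i)))

theorem IsAdmissible.abs_fComp_le (hκ : 0 < κ) {A : Matrix (Fin N) (Fin N) ℝ} {m : Fin N → ℝ}
    (h : IsAdmissible κ A m) (u : Fin N → ℝ) (i : Fin N) :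
    |fComp A m u i| ≤ (1 + N) / κ * (1 + ‖u‖) := by
  have hm : |m i| ≤ 1 / κ := abs_le.2 ⟨by linarith [h.le_apply i, (by positivity : 0 < 1 / κ)],
    h.2.1 i⟩
  have hsum : |∑ j, A i j * u j| ≤ N * (1 / κ * ‖u‖) := by
    refine (Finset.abs_sum_le_sum_abs _ _).trans ?_
    have hterm : ∀ j ∈ Finset.univ, |A i j * u j| ≤ 1 / κ * ‖u‖ := fun j _ => by
      rw [abs_mul]
      exact mul_le_mul (h.1 i j) (norm_le_pi_norm u j) (abs_nonneg _) (by positivity)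
    simpa using Finset.sum_le_card_nsmul _ _ _ hterm
  calc |fComp A m u i| ≤ |m i| + |∑ j, A i j * u j| := abs_sub _ _
    _ ≤ 1 / κ + N * (1 / κ * ‖u‖) + (N * (1 / κ) + 1 / κ * ‖u‖) :=
        (add_le_add hm hsum).trans (le_add_of_nonneg_right (by positivity))
    _ = (1 + N) / κ * (1 + ‖u‖) := by ring

theorem exists_one_add_norm_rpow_le (N : ℕ) (hp : 0 ≤ p) (hκ : 0 < κ) (hM : 0 < M) :
    ∃ C : ℝ, 0 ≤ C ∧ ∀ (A : Matrix (Fin N) (Fin N) ℝ) (m u : Fin N → ℝ), IsAdmissible κ A m →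
      0 ≤ u → (1 + ‖u‖) ^ p ≤ C * (1 + weightedDensity p M u (fComp A m u)) := by
  obtain ⟨K, hK0, hK⟩ := exists_norm_le_mul_abs_fComp N hκ
  have h1M : 0 < min 1 M := lt_min one_pos hM
  refine ⟨(1 + K) ^ p * max 1 (1 / min 1 M), by positivity, fun A m u hadm hu => ?_⟩
  have hdens := weightedDensity_nonneg (p := p) (f := fComp A m u) hM.le hu
  rw [mul_assoc]
  rcases le_or_gt ‖u‖ K with hKu | hKu
  · calc (1 + ‖u‖) ^ p ≤ (1 + K) ^ p * (1 * 1) := by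
          rw [one_mul, mul_one]
          exact Real.rpow_le_rpow (by positivity) (by linarith) hp
      _ ≤ _ := by gcongr; exacts [le_max_left _ _, by linarith]
  · obtain ⟨i, hui, hfi, hKf⟩ := hK A m u hadm hu hKu
    have hf1 : 1 ≤ |fComp A m u i| := le_abs.2 (Or.inr (le_neg_of_le_neg hfi))
    have hle := min_mul_rpow_le_weightedDensity (f := fComp A m u) hp hM.le hu
      (abs_nonneg _) hui le_rfl
    calc (1 + ‖u‖) ^ p ≤ ((1 + K) * |fComp A m u i|) ^ p :=
          Real.rpow_le_rpow (by positivity) (by linarith) hp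
      _ = (1 + K) ^ p * |fComp A m u i| ^ p := Real.mul_rpow (by positivity) (by positivity)
      _ ≤ (1 + K) ^ p * (1 / min 1 M * weightedDensity p M u (fComp A m u)) := by
          gcongr
          rwa [one_div, le_inv_mul_iff₀ h1M]
      _ ≤ _ := by gcongr; exacts [le_max_right _ _, by linarith]

theorem exists_sum_rpow_add_sum_rpow_le (N : ℕ) (hp : 0 ≤ p) (hκ : 0 < κ) (hM : 0 < M) :
    ∃ C : ℝ, 0 ≤ C ∧ ∀ (A : Matrix (Fin N) (Fin N) ℝ) (m u : Fin N → ℝ), IsAdmissible κ A m →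
      0 ≤ u → ∑ i, |u i| ^ p + ∑ i, |fComp A m u i| ^ p ≤
        C * (1 + weightedDensity p M u (fComp A m u)) := by
  obtain ⟨C, hC, hnorm⟩ := exists_one_add_norm_rpow_le N hp hκ hM
  have hsum : ∀ (v : Fin N → ℝ) (b : ℝ), (∀ i, |v i| ≤ b) → ∑ i, |v i| ^ p ≤ N * b ^ p :=
    fun v b hv => by
      simpa using Finset.sum_le_card_nsmul Finset.univ (fun i => |v i| ^ p) (b ^ p)
        fun i _ => Real.rpow_le_rpow (abs_nonneg _) (hv i) hp
  refine ⟨N * (1 + ((1 + N) / κ) ^ p) * C, by positivity, fun A m u hadm hu => ?_⟩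
  calc ∑ i, |u i| ^ p + ∑ i, |fComp A m u i| ^ p
      ≤ N * (1 + ‖u‖) ^ p + N * ((1 + N) / κ * (1 + ‖u‖)) ^ p :=
        add_le_add (hsum u _ fun i => (norm_le_pi_norm u i).trans (by simp))
          (hsum _ _ (hadm.abs_fComp_le hκ u))
    _ = N * (1 + ((1 + N) / κ) ^ p) * (1 + ‖u‖) ^ p := by
        rw [Real.mul_rpow (by positivity) (by positivity)]
        ring
    _ ≤ N * (1 + ((1 + N) / κ) ^ p) * (C * (1 + weightedDensity p M u (fComp A m u))) := by
        gcongr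
        exact hnorm A m u hadm hu
    _ = _ := by ring

/-- The pointwise information about a configuration `(u, f)` on which the analysis rests: for
`f ≥ -c` the facets `u_i = 0` and `f_i = 0` are separated; where the weighted density is below `η`,
each `f_i` avoids the interval `(c / 2, c)`; and `|u|^p + |f|^p` grows at most like the density. -/
structure IsFacetSeparated {ι : Type*} [Fintype ι] (p M c η C : ℝ) (u f : ι → ℝ) : Prop where
  nonneg : 0 ≤ u
  le_or_le : (∀ j, -c ≤ f j) → ∀ i, c ≤ u i ∨ c ≤ f i
  neg_half_le : weightedDensity p M u f < η → ∀ j, -(c / 2) ≤ f j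
  gap : weightedDensity p M u f < η → ∀ i, c ≤ u i ∧ f i ≤ c / 2 ∨ c ≤ f i
  sum_rpow_le : ∑ i, |u i| ^ p + ∑ i, |f i| ^ p ≤ C * (1 + weightedDensity p M u f)

theorem exists_isFacetSeparated (N : ℕ) (hp : 0 ≤ p) (hκ : 0 < κ) (hM : 0 < M) :
    ∃ c η C : ℝ, 0 < c ∧ 0 < η ∧ 0 ≤ C ∧
      ∀ (A : Matrix (Fin N) (Fin N) ℝ) (m u : Fin N → ℝ), IsAdmissible κ A m → 0 ≤ u →
        IsFacetSeparated p M c η C u (fComp A m u) := by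
  obtain ⟨c, hsep, hc : 0 < c⟩ :=
    ((eventually_le_or_le_fComp N hκ).and self_mem_nhdsWithin).exists
  have hgap : 0 < min c M * (c / 2) ^ p := mul_pos (lt_min hc hM) (by positivity)
  obtain ⟨η, hη, hη0⟩ := ((eventually_forall_weightedDensity_lt_imp_le_fComp N hp hκ hM
    (half_pos hc)).and (Ioo_mem_nhdsGT hgap)).exists
  obtain ⟨C, hC, hgrowth⟩ := exists_sum_rpow_add_sum_rpow_le N hp hκ hM
  refine ⟨c, η, C, hc, hη0.1, hC, fun A m u hadm hu => ?_⟩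
  have hsep' := hsep A m u hadm hu
  have hneg := hη A m u hadm hu
  refine ⟨hu, hsep', hneg, fun hdens i => ?_, hgrowth A m u hadm hu⟩
  refine (hsep' (fun j => by linarith [hneg hdens j]) i).imp_left fun hui => ⟨hui, ?_⟩
  by_contra! hfi
  linarith [hη0.2, min_mul_rpow_le_weightedDensity hp hM.le hu (half_pos hc).le hui
    (hfi.le.trans (le_abs_self _))]

end PointwiseBounds

/-! ### Eilenberg's inequality and a co-area majorant -/

section Eilenberg

variable {X : Type*} [EMetricSpace X]

theorem exists_cover_tsum_ediam_rpow_le [MeasurableSpace X] [BorelSpace X] {s : ℝ} (hs : 0 < s)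
    {D : Set X} (hD : μH[s] D ≠ ⊤) {ε : ENNReal} (hε : 0 < ε) :
    ∃ t : ℕ → Set X, D ⊆ ⋃ k, t k ∧ (∀ k, Metric.ediam (t k) ≤ ε) ∧
      ∑' k, Metric.ediam (t k) ^ s ≤ μH[s] D + ε := by
  have hle : (⨅ (t : ℕ → Set X) (_ : D ⊆ ⋃ n, t n) (_ : ∀ k, Metric.ediam (t k) ≤ ε),
      ∑' n, ⨆ _ : (t n).Nonempty, Metric.ediam (t n) ^ s) ≤ μH[s] D := by
    rw [Measure.hausdorffMeasure_apply s D]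
    exact le_iSup₂_of_le ε hε le_rfl
  obtain ⟨t, ht⟩ := iInf_lt_iff.1 (hle.trans_lt (ENNReal.lt_add_right hD hε.ne'))
  obtain ⟨hcover, ht⟩ := iInf_lt_iff.1 ht
  obtain ⟨hdiam, ht⟩ := iInf_lt_iff.1 ht
  refine ⟨t, hcover, hdiam, (ENNReal.tsum_le_tsum fun k => ?_).trans ht.le⟩
  rcases (t k).eq_empty_or_nonempty with hempty | hne
  · simp [hempty, ENNReal.zero_rpow_of_pos hs]
  · exact le_iSup_of_le hne le_rfl

variable {D : Set X} {h : X → ℝ} {L : NNReal}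

theorem exists_measurable_tsum_ediam_rpow_le_lintegral_le (hL : LipschitzOnWith L h D) {s : ℝ}
    (hs : 1 ≤ s) (t : ℕ → Set X) :
    ∃ g : ℝ → ENNReal, Measurable g ∧
      (∀ y, ∑' k : {k // (t k ∩ D ∩ h ⁻¹' {y}).Nonempty}, Metric.ediam (t k) ^ (s - 1) ≤ g y) ∧
      ∫⁻ y, g y ≤ L * ∑' k, Metric.ediam (t k) ^ s := by
  set J : ℕ → Set ℝ := fun k => toMeasurable volume (h '' (t k ∩ D))
  have hJm : ∀ k, MeasurableSet (J k) := fun k => measurableSet_toMeasurable _ _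
  have hJ : ∀ k, volume (J k) ≤ L * Metric.ediam (t k) := fun k => by
    rw [measure_toMeasurable]
    refine (Real.volume_le_diam _).trans (Metric.ediam_le ?_)
    rintro _ ⟨x, hx, rfl⟩ _ ⟨y, hy, rfl⟩
    refine (hL hx.2 hy.2).trans ?_
    gcongr
    exact Metric.edist_le_ediam_of_mem hx.1 hy.1
  set a : ℕ → ENNReal := fun k => Metric.ediam (t k) ^ (s - 1)
  refine ⟨fun y => ∑' k, (J k).indicator (fun _ => a k) y,
    Measurable.tsum fun k => measurable_const.indicator (hJm k), fun y => ?_, ?_⟩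
  · refine le_trans (ENNReal.tsum_le_tsum fun k => ?_)
      (ENNReal.tsum_comp_le_tsum_of_injective Subtype.val_injective _)
    obtain ⟨x, hx, hxy⟩ := k.2
    have hy : y ∈ J k := subset_toMeasurable _ _ ⟨x, hx, hxy⟩
    rw [Set.indicator_of_mem hy]
  · rw [lintegral_tsum fun k => (measurable_const.indicator (hJm k)).aemeasurable,
      ← ENNReal.tsum_mul_left]
    refine ENNReal.tsum_le_tsum fun k => ?_
    calc ∫⁻ y, (J k).indicator (fun _ => a k) y
        = a k * volume (J k) := lintegral_indicator_const (hJm k) _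
      _ ≤ a k * (L * Metric.ediam (t k) ^ (1 : ℝ)) := by
          rw [ENNReal.rpow_one]
          gcongr
          exact hJ k
      _ = L * Metric.ediam (t k) ^ s := by
          rw [mul_left_comm, ← ENNReal.rpow_add_of_nonneg _ _ (sub_nonneg.2 hs) zero_le_one,
            sub_add_cancel]

/-- Eilenberg's inequality. The function `y ↦ μH[s - 1] (D ∩ h ⁻¹' {y})` need not be measurable,
hence the majorant. -/
theorem exists_measurable_hausdorffMeasure_inter_preimage_le [MeasurableSpace X] [BorelSpace X]
    (hL : LipschitzOnWith L h D) {s : ℝ} (hs : 1 ≤ s) (hD : μH[s] D ≠ ⊤) :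
    ∃ φ : ℝ → ENNReal, Measurable φ ∧ (∀ y, μH[s - 1] (D ∩ h ⁻¹' {y}) ≤ φ y) ∧
      ∫⁻ y, φ y ≤ L * μH[s] D := by
  obtain ⟨r, -, hr0, hrlim⟩ := exists_seq_strictAnti_tendsto' (zero_lt_one' ENNReal)
  choose t hcover hdiam hsum using fun n =>
    exists_cover_tsum_ediam_rpow_le (zero_lt_one.trans_le hs) hD (hr0 n).1
  choose g hgm hg hgint using fun n =>
    exists_measurable_tsum_ediam_rpow_le_lintegral_le hL hs (t n)
  refine ⟨fun y => liminf (fun n => g n y) atTop, Measurable.liminf hgm, fun y => ?_, ?_⟩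
  · refine (Measure.hausdorffMeasure_le_liminf_tsum
      (ι := fun n => {k // (t n k ∩ D ∩ h ⁻¹' {y}).Nonempty}) (s - 1) _ r hrlim
      (fun n k => t n k) (Eventually.of_forall fun n k => hdiam n k)
      (Eventually.of_forall fun n x hx => ?_)).trans
      (liminf_le_liminf (Eventually.of_forall fun n => hg n y))
    obtain ⟨k, hk⟩ := Set.mem_iUnion.1 (hcover n hx.1)
    exact Set.mem_iUnion.2 ⟨⟨k, x, ⟨hk, hx.1⟩, hx.2⟩, hk⟩
  · have hlim : Tendsto (fun n => (L : ENNReal) * (μH[s] D + r n)) atTop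
        (nhds (L * (μH[s] D + 0))) :=
      ENNReal.Tendsto.const_mul (tendsto_const_nhds.add hrlim) (Or.inr ENNReal.coe_ne_top)
    calc ∫⁻ y, liminf (fun n => g n y) atTop
        ≤ liminf (fun n => ∫⁻ y, g n y) atTop := lintegral_liminf_le hgm
      _ ≤ liminf (fun n => L * (μH[s] D + r n)) atTop :=
          liminf_le_liminf (Eventually.of_forall fun n => (hgint n).trans (by gcongr; exact hsum n))
      _ = L * μH[s] D := by rw [hlim.liminf_eq, add_zero]

end Eilenberg

section Coarea

open Module (finrank)

theorem exists_iUnion_ball_eq_and_dist_le {X F : Type*} [PseudoMetricSpace X]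
    [SecondCountableTopology X] [Nonempty X] [PseudoMetricSpace F] {O : Set X} (hO : IsOpen O)
    {G : X → F} (hG : ContinuousOn G O) {ε : ℝ} (hε : 0 < ε) :
    ∃ (x : ℕ → X) (r : ℕ → ℝ), ⋃ n, Metric.ball (x n) (r n) = O ∧
      ∀ n, ∀ y ∈ Metric.ball (x n) (r n), ∀ z ∈ Metric.ball (x n) (r n), dist (G y) (G z) ≤ ε := by
  set S : Set (X × ℝ) := {q | Metric.ball q.1 q.2 ⊆ O ∧
    ∀ y ∈ Metric.ball q.1 q.2, ∀ z ∈ Metric.ball q.1 q.2, dist (G y) (G z) ≤ ε}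
  have hS : ⋃ q : S, Metric.ball q.1.1 q.1.2 = O := by
    refine (Set.iUnion_subset fun q => q.2.1).antisymm fun x hx => ?_
    obtain ⟨r, hr, hsub⟩ := Metric.mem_nhds_iff.1 (inter_mem (hO.mem_nhds hx)
      ((hG.continuousAt (hO.mem_nhds hx)).preimage_mem_nhds
        (Metric.ball_mem_nhds _ (half_pos hε))))
    refine Set.mem_iUnion.2 ⟨⟨(x, r), fun y hy => (hsub hy).1, fun y hy z hz => ?_⟩,
      Metric.mem_ball_self hr⟩
    exact (dist_triangle_right _ _ (G x)).trans
      ((add_lt_add (hsub hy).2 (hsub hz).2).le.trans_eq (add_halves ε))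
  obtain ⟨T, hT, hTU⟩ := TopologicalSpace.isOpen_iUnion_countable
    (fun q : S => Metric.ball q.1.1 q.1.2) fun _ => Metric.isOpen_ball
  let q₀ : S := ⟨(Classical.arbitrary X, 0), by simp, by simp⟩
  obtain ⟨e, he⟩ := (hT.insert q₀).exists_eq_range (Set.insert_nonempty _ _)
  refine ⟨fun n => (e n).1.1, fun n => (e n).1.2, ?_, fun n => (e n).2.2⟩
  rw [← hS, ← hTU, ← Set.biUnion_range (f := e) (g := fun q : S => Metric.ball q.1.1 q.1.2), ← he,
    Set.biUnion_insert]
  simp [q₀]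

variable {E : Type*} [NormedAddCommGroup E] [NormedSpace ℝ E] [FiniteDimensional ℝ E]
  [MeasurableSpace E] [BorelSpace E] [Nontrivial E] {h : E → ℝ} {ε : NNReal}

theorem exists_coarea_majorant_of_dist_fderiv_le {x : E} {r : ℝ} {D : Set E}
    (hDr : D ⊆ Metric.ball x r) (hD : MeasurableSet D)
    (hdiff : ∀ y ∈ Metric.ball x r, DifferentiableAt ℝ h y)
    (hosc : ∀ y ∈ Metric.ball x r, ∀ z ∈ Metric.ball x r,
      dist (fderiv ℝ h y) (fderiv ℝ h z) ≤ ε) :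
    ∃ φ : ℝ → ENNReal, Measurable φ ∧ (∀ s, μH[finrank ℝ E - 1] (D ∩ h ⁻¹' {s}) ≤ φ s) ∧
      ∫⁻ s, φ s ≤ ∫⁻ y in D, (‖fderiv ℝ h y‖ₑ + 2 * ε) ∂μH[finrank ℝ E] := by
  rcases D.eq_empty_or_nonempty with rfl | ⟨x₀, hx₀⟩
  · exact ⟨0, measurable_const, by simp, by simp⟩
  have hnorm : ∀ y ∈ Metric.ball x r, ∀ z ∈ Metric.ball x r,
      ‖fderiv ℝ h y‖₊ ≤ ‖fderiv ℝ h z‖₊ + ε := fun y hy z hz => by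
    have hle := hosc y hy z hz
    rw [dist_eq_norm] at hle
    rw [← NNReal.coe_le_coe, NNReal.coe_add, coe_nnnorm, coe_nnnorm]
    linarith [norm_le_norm_add_norm_sub' (fderiv ℝ h y) (fderiv ℝ h z)]
  have hLip : LipschitzOnWith (‖fderiv ℝ h x₀‖₊ + ε) h D :=
    ((convex_ball x r).lipschitzOnWith_of_nnnorm_fderiv_le (𝕜 := ℝ) hdiff
      fun y hy => hnorm y hy x₀ (hDr hx₀)).mono hDr
  obtain ⟨φ, hφm, hφ, hφi⟩ := exists_measurable_hausdorffMeasure_inter_preimage_le hLip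
    (s := finrank ℝ E) (by exact_mod_cast Module.finrank_pos (R := ℝ) (M := E))
    ((measure_mono hDr).trans_lt measure_ball_lt_top).ne
  refine ⟨φ, hφm, hφ, hφi.trans ?_⟩
  rw [← setLIntegral_const]
  refine setLIntegral_mono' hD fun y hy => ?_
  have hle := hnorm x₀ (hDr hx₀) y (hDr hy)
  calc ((‖fderiv ℝ h x₀‖₊ + ε : NNReal) : ENNReal)
      ≤ ((‖fderiv ℝ h y‖₊ + ε + ε : NNReal) : ENNReal) := by gcongr
    _ = ‖fderiv ℝ h y‖ₑ + 2 * ε := by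
      rw [enorm_eq_nnnorm, two_mul, ← add_assoc]
      rfl

/-- The error `ε` pays for splitting `O` into pieces on which the derivative is almost constant, so
that it is comparable there to the Lipschitz constant in Eilenberg's inequality. -/
theorem exists_coarea_majorant {O : Set E} (hO : IsOpen O) (hh : ContDiffOn ℝ 1 h O)
    (hε : 0 < ε) :
    ∃ φ : ℝ → ENNReal, Measurable φ ∧ (∀ s, μH[finrank ℝ E - 1] (O ∩ h ⁻¹' {s}) ≤ φ s) ∧
      ∫⁻ s, φ s ≤ ∫⁻ x in O, (‖fderiv ℝ h x‖ₑ + ε) ∂μH[finrank ℝ E] := by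
  obtain ⟨x, r, hball, hosc⟩ := exists_iUnion_ball_eq_and_dist_le hO
    (hh.continuousOn_fderiv_of_isOpen hO le_rfl) (ε := (ε / 2 : NNReal)) (by positivity)
  set D : ℕ → Set E := disjointed fun n => Metric.ball (x n) (r n)
  have hDm : ∀ n, MeasurableSet (D n) := .disjointed fun _ => measurableSet_ball
  have hDball : ∀ n, D n ⊆ Metric.ball (x n) (r n) := disjointed_subset _
  have hDO : ⋃ n, D n = O := iUnion_disjointed.trans hball
  have hdiff : ∀ n, ∀ y ∈ Metric.ball (x n) (r n), DifferentiableAt ℝ h y := fun n y hy =>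
    (hh.differentiableOn one_ne_zero).differentiableAt
      (hO.mem_nhds (hball ▸ Set.mem_iUnion_of_mem n hy))
  choose φ hφm hφ hφi using fun n => exists_coarea_majorant_of_dist_fderiv_le
    (hDball n) (hDm n) (hdiff n) (hosc n)
  refine ⟨fun s => ∑' n, φ n s, Measurable.tsum hφm, fun s => ?_, ?_⟩
  · rw [← hDO, Set.iUnion_inter]
    exact (measure_iUnion_le _).trans (ENNReal.tsum_le_tsum fun n => hφ n s)
  · rw [lintegral_tsum fun n => (hφm n).aemeasurable, ← hDO,
      lintegral_iUnion hDm (disjoint_disjointed _)]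
    refine ENNReal.tsum_le_tsum fun n => (hφi n).trans_eq ?_
    rw [← ENNReal.coe_two, ← ENNReal.coe_mul, mul_div_cancel₀ _ two_ne_zero]

end Coarea

/-! ### The relative isoperimetric inequality -/

section Levels

variable {X : Type*} {Ω : Set X}

theorem measure_sdiff_le_half [MeasurableSpace X] {μ : Measure X} {S : Set X}
    (hSΩ : S ⊆ Ω) (hS : MeasurableSet S) (hΩ : μ Ω ≠ ⊤) (hhalf : μ Ω / 2 ≤ μ S) :
    μ (Ω \ S) ≤ μ Ω / 2 := by
  rw [measure_sdiff hSΩ hS.nullMeasurableSet (measure_ne_top_of_subset hSΩ hΩ), tsub_le_iff_right]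
  calc μ Ω = μ Ω / 2 + μ Ω / 2 := (ENNReal.add_halves _).symm
    _ ≤ μ Ω / 2 + μ S := by gcongr

theorem inter_frontier_sdiff [TopologicalSpace X] (hΩ : IsOpen Ω) (S : Set X) :
    Ω ∩ frontier (Ω \ S) = Ω ∩ frontier S := by
  rw [Set.sdiff_eq_compl_inter, Set.inter_comm Ω, frontier_inter_open_inter hΩ, frontier_compl,
    Set.inter_comm]

variable [TopologicalSpace X] {ι : Type*} [Finite ι] {h : ι → X → ℝ}

theorem isOpen_setOf_forall_lt (hΩ : IsOpen Ω) (hh : ∀ k, ContinuousOn (h k) Ω) (s : ℝ) :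
    IsOpen {x ∈ Ω | ∀ k, s < h k x} := by
  refine isOpen_iff_mem_nhds.2 fun x hx => ?_
  have hlt : ∀ k, ∀ᶠ y in nhds x, s < h k y := fun k =>
    ((hh k).continuousAt (hΩ.mem_nhds hx.1)).eventually (lt_mem_nhds (hx.2 k))
  filter_upwards [hΩ.mem_nhds hx.1, eventually_all.2 hlt] with y hyΩ hy using ⟨hyΩ, hy⟩

theorem inter_frontier_setOf_forall_lt_subset (hΩ : IsOpen Ω)
    (hh : ∀ k, ContinuousOn (h k) Ω) (s : ℝ) :
    Ω ∩ frontier {x ∈ Ω | ∀ k, s < h k x} ⊆ {x ∈ Ω | (∀ k, s ≤ h k x) ∧ ∃ k, h k x = s} := by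
  rintro x ⟨hx, hfr⟩
  rw [(isOpen_setOf_forall_lt hΩ hh s).frontier_eq] at hfr
  have hge : ∀ k, s ≤ h k x := fun k => by
    by_contra! hlt
    obtain ⟨y, hy, hyS⟩ := mem_closure_iff.1 hfr.1 _
      ((hh k).isOpen_inter_preimage hΩ isOpen_Iio) ⟨hx, hlt⟩
    exact lt_asymm (hyS.2 k) hy.2
  refine ⟨hx, hge, ?_⟩
  by_contra! hne
  exact hfr.2 ⟨hx, fun k => (hge k).lt_of_ne' (hne k)⟩

end Levels

section Isoperimetry

open Module (finrank)

variable {E : Type*} [NormedAddCommGroup E] [NormedSpace ℝ E] [MeasurableSpace E] [BorelSpace E]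
  {μ : Measure E} {Ω : Set E}

/-- The relative isoperimetric inequality in `Ω`, with the Hausdorff measure of the topological
boundary in place of the perimeter. Null sets are excluded because in dimension one the left-hand
side would be the junk value `0 ^ 0 = 1`. -/
def HasRelIsoperimetricInequality (μ : Measure E) (Ω : Set E) : Prop :=
  ∃ c : ℝ, 0 < c ∧ ∀ S ⊆ Ω, MeasurableSet S → μ S ≠ 0 → μ S ≤ μ Ω / 2 →
    ENNReal.ofReal c * μ S ^ (((finrank ℝ E : ℝ) - 1) / finrank ℝ E) ≤
      μH[finrank ℝ E - 1] (Ω ∩ frontier S)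

/-- The power of `μ S` may be replaced by `μ S` itself because `μ S ≤ μ Ω < ∞`. -/
theorem HasRelIsoperimetricInequality.exists_min_measure_le [Nontrivial E] [FiniteDimensional ℝ E]
    (hiso : HasRelIsoperimetricInequality μ Ω) (hΩo : IsOpen Ω) (hΩ : μ Ω ≠ ⊤) :
    ∃ C : NNReal, ∀ S ⊆ Ω, MeasurableSet S →
      min (μ S) (μ (Ω \ S)) ≤ C * μH[finrank ℝ E - 1] (Ω ∩ frontier S) := by
  obtain ⟨c, hc, hiso⟩ := hiso
  have hc0 : ENNReal.ofReal c ≠ 0 := (ENNReal.ofReal_pos.2 hc).ne'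
  have hn : (0 : ℝ) < finrank ℝ E := by exact_mod_cast Module.finrank_pos (R := ℝ) (M := E)
  set n : ℝ := (finrank ℝ E : ℝ)
  have hC : μ Ω ^ (1 / n) * (ENNReal.ofReal c)⁻¹ ≠ ⊤ := by finiteness
  have hhalf : ∀ S ⊆ Ω, MeasurableSet S → μ S ≤ μ Ω / 2 →
      μ S ≤ μ Ω ^ (1 / n) * (ENNReal.ofReal c)⁻¹ * μH[n - 1] (Ω ∩ frontier S) := by
    intro S hSΩ hS hSle
    rcases eq_or_ne (μ S) 0 with h0 | h0
    · simp [h0]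
    calc μ S = μ S ^ (1 / n) * μ S ^ ((n - 1) / n) := by
          rw [← ENNReal.rpow_add _ _ h0 (measure_ne_top_of_subset hSΩ hΩ), ← add_div,
            add_sub_cancel, div_self hn.ne', ENNReal.rpow_one]
      _ ≤ μ Ω ^ (1 / n) * ((ENNReal.ofReal c)⁻¹ * μH[n - 1] (Ω ∩ frontier S)) := by
          gcongr
          exact (ENNReal.mul_le_iff_le_inv hc0 ENNReal.ofReal_ne_top).1 (hiso S hSΩ hS h0 hSle)
      _ = _ := (mul_assoc _ _ _).symm
  refine ⟨(μ Ω ^ (1 / n) * (ENNReal.ofReal c)⁻¹).toNNReal, fun S hSΩ hS => ?_⟩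
  rw [ENNReal.coe_toNNReal hC]
  rcases le_total (μ S) (μ Ω / 2) with hle | hge
  · exact (min_le_left _ _).trans (hhalf S hSΩ hS hle)
  · rw [← inter_frontier_sdiff hΩo S]
    exact (min_le_right _ _).trans (hhalf _ Set.sdiff_subset (hΩo.measurableSet.diff hS)
      (measure_sdiff_le_half hSΩ hS hΩ hge))

variable {ι : Type*} {h : ι → E → ℝ}

/-- A co-area estimate for `min_k (h k)`, whose level sets are covered by those of the `h k`. -/
theorem ofReal_mul_min_measure_le_sum_lintegral_fderiv [Nontrivial E] [FiniteDimensional ℝ E]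
    [Fintype ι] {C : NNReal} (hC : ∀ S ⊆ Ω, MeasurableSet S →
      min (μ S) (μ (Ω \ S)) ≤ C * μH[finrank ℝ E - 1] (Ω ∩ frontier S))
    (hΩ : IsOpen Ω) (hh : ∀ k, ContDiffOn ℝ 1 (h k) Ω) {O : ι → Set E} (hO : ∀ k, IsOpen (O k))
    (hOΩ : ∀ k, O k ⊆ Ω) {τ : ℝ}
    (htrans : ∀ x ∈ Ω, ∀ k, (∀ l, h k x ≤ h l x) → 0 < h k x → h k x < τ → x ∈ O k) :
    ENNReal.ofReal τ * min (μ {x ∈ Ω | ∀ k, τ ≤ h k x}) (μ {x ∈ Ω | ∃ k, h k x ≤ 0}) ≤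
      C * ∑ k, ∫⁻ x in O k, (‖fderiv ℝ (h k) x‖ₑ + 1) ∂μH[finrank ℝ E] := by
  choose φ hφm hφ hφi using fun k =>
    exists_coarea_majorant (hO k) ((hh k).mono (hOΩ k)) one_pos
  have hcont := fun k => (hh k).continuousOn
  set V := min (μ {x ∈ Ω | ∀ k, τ ≤ h k x}) (μ {x ∈ Ω | ∃ k, h k x ≤ 0})
  have hlevel : ∀ s ∈ Set.Ioo 0 τ, V ≤ C * ∑ k, φ k s := fun s hs => by
    set S : Set E := {x ∈ Ω | ∀ k, s < h k x}
    have hfr : Ω ∩ frontier S ⊆ ⋃ k, O k ∩ h k ⁻¹' {s} := fun x hx => by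
      obtain ⟨hxΩ, hge, k, hk⟩ := inter_frontier_setOf_forall_lt_subset hΩ hcont s hx
      exact Set.mem_iUnion.2 ⟨k, htrans x hxΩ k (hk ▸ hge) (hk ▸ hs.1) (hk ▸ hs.2), hk⟩
    calc V ≤ min (μ S) (μ (Ω \ S)) := min_le_min
          (measure_mono fun x hx => ⟨hx.1, fun k => hs.2.trans_le (hx.2 k)⟩)
          (measure_mono fun x ⟨hx, k, hk⟩ => ⟨hx, fun hxS => (hs.1.trans (hxS.2 k)).not_ge hk⟩)
      _ ≤ C * μH[finrank ℝ E - 1] (Ω ∩ frontier S) :=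
          hC S (fun x hx => hx.1) (isOpen_setOf_forall_lt hΩ hcont s).measurableSet
      _ ≤ C * ∑ k, φ k s := by
          gcongr
          exact (measure_mono hfr).trans ((measure_iUnion_fintype_le _ _).trans
            (Finset.sum_le_sum fun k _ => hφ k s))
  calc ENNReal.ofReal τ * V = ∫⁻ _ in Set.Ioo 0 τ, V := by
        rw [setLIntegral_const, Real.volume_Ioo, sub_zero, mul_comm]
    _ ≤ ∫⁻ s in Set.Ioo 0 τ, C * ∑ k, φ k s := setLIntegral_mono' measurableSet_Ioo hlevel
    _ ≤ ∫⁻ s, C * ∑ k, φ k s := setLIntegral_le_lintegral _ _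
    _ = C * ∑ k, ∫⁻ s, φ k s := by
        rw [lintegral_const_mul _ (Finset.measurable_fun_sum _ fun k _ => hφm k),
          lintegral_finsetSum _ fun k _ => hφm k]
    _ ≤ _ := by
        gcongr with k
        exact hφi k

end Isoperimetry

/-! ### The transition estimate -/

section Transition

open Module (finrank)

variable {E : Type*} [NormedAddCommGroup E] [NormedSpace ℝ E] {ι : Type*} {p M : ℝ}

/-- The transition function `min (f_i - c / 2) (min_j (f_j + c))`, given as the family of the
functions under the minimum. -/
noncomputable def transitionFamily (c : ℝ) (f : ι → ℝ) (i : ι) (k : Option ι) : ℝ :=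
  f (k.getD i) + k.elim (-(c / 2)) fun _ => c

section TransitionFamily

variable {c : ℝ} {u f : ι → ℝ} {i : ι}

theorem transitionFamily_none : transitionFamily c f i none = f i + -(c / 2) := rfl

theorem transitionFamily_some (j : ι) : transitionFamily c f i (some j) = f j + c := rfl

theorem half_le_transitionFamily (hneg : ∀ j, -(c / 2) ≤ f j) (hi : c ≤ f i) (k : Option ι) :
    c / 2 ≤ transitionFamily c f i k := by
  rcases k with _ | j
  · linarith [transitionFamily_none (c := c) (f := f) (i := i)]
  · linarith [transitionFamily_some (c := c) (f := f) (i := i) j, hneg j]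

theorem lt_and_lt_abs_of_transitionFamily_mem_Ioo
    (hsep : (∀ j, -c ≤ f j) → ∀ i, c ≤ u i ∨ c ≤ f i) {k : Option ι}
    (hmin : ∀ l, transitionFamily c f i k ≤ transitionFamily c f i l)
    (hk : transitionFamily c f i k ∈ Set.Ioo 0 (c / 2)) :
    c / 4 < u (k.getD i) ∧ c / 4 < |f (k.getD i)| := by
  have hneg : ∀ j, -c ≤ f j := fun j =>
    neg_le_iff_add_nonneg.2 (hk.1.le.trans (hmin (some j)))
  obtain ⟨hpos, hlt⟩ := hk
  rcases k with _ | j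
  · rw [transitionFamily_none] at hpos hlt
    have hu : c ≤ u i := (hsep hneg i).resolve_right (not_le.2 (by linarith))
    simp only [Option.getD_none]
    exact ⟨by linarith, lt_abs.2 (Or.inl (by linarith))⟩
  · rw [transitionFamily_some] at hpos hlt
    have hu : c ≤ u j := (hsep hneg j).resolve_right (not_le.2 (by linarith))
    simp only [Option.getD_some]
    exact ⟨by linarith, lt_abs.2 (Or.inr (by linarith))⟩

end TransitionFamily

variable [Fintype ι]

/-- The density `Σ_i min(u_i, M) (|f_i|^p + |∇f_i|^p)` of the weighted energy. -/
noncomputable def energyDensity (p M : ℝ) (u f : E → ι → ℝ) (x : E) : ℝ :=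
  ∑ i, min (u x i) M * (|f x i| ^ p + ‖fderiv ℝ (fun y => f y i) x‖ ^ p)

theorem weightedDensity_le_energyDensity (hM : 0 ≤ M) {u f : E → ι → ℝ} {x : E} (hu : 0 ≤ u x) :
    weightedDensity p M (u x) (f x) ≤ energyDensity p M u f x :=
  Finset.sum_le_sum fun i _ => mul_le_mul_of_nonneg_left
    (le_add_of_nonneg_right (by positivity)) (le_min (hu i) hM)

theorem exists_add_one_le_mul_rpow_add_rpow (hp : 1 ≤ p) {b : ℝ} (hb : 0 < b) :
    ∃ C : ℝ, 0 ≤ C ∧ ∀ v g : ℝ, b ≤ v → 0 ≤ g → g + 1 ≤ C * (v ^ p + g ^ p) := by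
  have hbp : 0 < b ^ p := by positivity
  refine ⟨2 / b ^ p + 1, by positivity, fun v g hv hg => ?_⟩
  have hgp : g ≤ 1 + g ^ p := by
    rcases le_total g 1 with h | h
    · linarith [Real.rpow_nonneg hg p]
    · linarith [Real.self_le_rpow_of_one_le h hp]
  have hvp : b ^ p ≤ v ^ p := Real.rpow_le_rpow hb.le hv (zero_le_one.trans hp)
  calc g + 1 ≤ 2 / b ^ p * b ^ p + g ^ p := by
        rw [div_mul_cancel₀ _ hbp.ne']
        linarith
    _ ≤ 2 / b ^ p * (v ^ p + g ^ p) + (v ^ p + g ^ p) := by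
        gcongr
        · exact le_add_of_le_of_nonneg hvp (by positivity)
        · exact le_add_of_nonneg_left (hbp.le.trans hvp)
    _ = _ := by ring

theorem exists_norm_fderiv_add_one_le_energyDensity (hp : 1 ≤ p) (hM : 0 < M) {b : ℝ}
    (hb : 0 < b) :
    ∃ C : ℝ, 0 ≤ C ∧ ∀ (u f : E → ι → ℝ) (x : E) (k : ι), 0 ≤ u x → b ≤ u x k → b ≤ |f x k| →
      ‖fderiv ℝ (fun y => f y k) x‖ + 1 ≤ C * energyDensity p M u f x := by
  obtain ⟨C, hC, hg⟩ := exists_add_one_le_mul_rpow_add_rpow hp hb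
  have : 0 < min b M := lt_min hb hM
  refine ⟨C / min b M, by positivity, fun u f x k hu hbu hbf => ?_⟩
  set g := ‖fderiv ℝ (fun y => f y k) x‖
  calc g + 1 ≤ C * (|f x k| ^ p + g ^ p) := hg _ _ hbf (norm_nonneg _)
    _ = C / min b M * (min b M * (|f x k| ^ p + g ^ p)) := by field_simp
    _ ≤ C / min b M * (min (u x k) M * (|f x k| ^ p + g ^ p)) := by gcongr
    _ ≤ C / min b M * energyDensity p M u f x := by
        gcongr
        exact Finset.single_le_sum (f := fun i => min (u x i) M *
          (|f x i| ^ p + ‖fderiv ℝ (fun y => f y i) x‖ ^ p))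
          (fun i _ => mul_nonneg (le_min (hu i) hM.le) (by positivity)) (Finset.mem_univ k)

variable [FiniteDimensional ℝ E] [MeasurableSpace E] [BorelSpace E] (μ : Measure E)
  [μ.IsAddHaarMeasure]

theorem exists_setLIntegral_enorm_fderiv_add_one_le (hp : 1 ≤ p) (hM : 0 < M) {b : ℝ}
    (hb : 0 < b) :
    ∃ C : NNReal, ∀ (u f : E → ι → ℝ) (k : ι) (O : Set E), MeasurableSet O →
      (∀ x ∈ O, 0 ≤ u x ∧ b ≤ u x k ∧ b ≤ |f x k|) →
      ∫⁻ x in O, (‖fderiv ℝ (fun y => f y k) x‖ₑ + 1) ∂μH[finrank ℝ E] ≤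
        C * ∫⁻ x in O, ENNReal.ofReal (energyDensity p M u f x) ∂μ := by
  obtain ⟨C, hC, hle⟩ := exists_norm_fderiv_add_one_le_energyDensity (E := E) (ι := ι) hp hM hb
  set H : Measure E := μH[finrank ℝ E]
  refine ⟨H.addHaarScalarFactor μ * C.toNNReal, fun u f k O hO hbd => ?_⟩
  have hpt : ∀ x ∈ O, ‖fderiv ℝ (fun y => f y k) x‖ₑ + 1 ≤
      ENNReal.ofReal C * ENNReal.ofReal (energyDensity p M u f x) := fun x hx => by
    obtain ⟨hu, hbu, hbf⟩ := hbd x hx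
    rw [← ofReal_norm, ← ENNReal.ofReal_one, ← ENNReal.ofReal_add (norm_nonneg _) zero_le_one,
      ← ENNReal.ofReal_mul hC]
    exact ENNReal.ofReal_le_ofReal (hle u f x k hu hbu hbf)
  have hHμ : H.restrict O = H.addHaarScalarFactor μ • μ.restrict O := by
    rw [← Measure.restrict_smul, ← Measure.isAddLeftInvariant_eq_smul H μ]
  rw [hHμ, lintegral_smul_measure, ENNReal.smul_def, smul_eq_mul, ENNReal.coe_mul, mul_assoc]
  gcongr
  exact (setLIntegral_mono' hO hpt).trans_eq (lintegral_const_mul' _ _ ENNReal.ofReal_ne_top)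

variable {c : ℝ} {Ω : Set E}

theorem ofReal_mul_min_measure_gap_le [Nontrivial E] {μ : Measure E} {C : NNReal}
    (hC : ∀ S ⊆ Ω, MeasurableSet S →
      min (μ S) (μ (Ω \ S)) ≤ C * μH[finrank ℝ E - 1] (Ω ∩ frontier S))
    (hΩ : IsOpen Ω) {u f : E → ι → ℝ} (hf : ∀ k, ContDiffOn ℝ 1 (fun x => f x k) Ω)
    (hsep : ∀ x ∈ Ω, (∀ j, -c ≤ f x j) → ∀ i, c ≤ u x i ∨ c ≤ f x i)
    {W : ι → Set E} (hWo : ∀ k, IsOpen (W k)) (hWΩ : ∀ k, W k ⊆ Ω)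
    (hW : ∀ x ∈ Ω, ∀ k, c / 4 < u x k → c / 4 < |f x k| → x ∈ W k) (i : ι) :
    ENNReal.ofReal (c / 2) *
        min (μ {x ∈ Ω | (∀ j, -(c / 2) ≤ f x j) ∧ c ≤ f x i}) (μ {x ∈ Ω | f x i ≤ c / 2}) ≤
      C * ∑ k : Option ι, ∫⁻ x in W (k.getD i),
        (‖fderiv ℝ (fun y => f y (k.getD i)) x‖ₑ + 1) ∂μH[finrank ℝ E] := by
  have hlevels := ofReal_mul_min_measure_le_sum_lintegral_fderiv (τ := c / 2)
    (h := fun k x => transitionFamily c (f x) i k) hC hΩ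
    (fun k => (hf _).add contDiffOn_const) (fun k => hWo (k.getD i)) (fun k => hWΩ _)
    fun x hx k hmin hpos hlt => by
      obtain ⟨hu, hfk⟩ := lt_and_lt_abs_of_transitionFamily_mem_Ioo (hsep x hx) hmin ⟨hpos, hlt⟩
      exact hW x hx _ hu hfk
  have hfderiv : ∀ (k : Option ι) (x : E), fderiv ℝ (fun y => transitionFamily c (f y) i k) x =
      fderiv ℝ (fun y => f y (k.getD i)) x := fun k x => fderiv_add_const _
  simp only [hfderiv] at hlevels
  refine le_trans ?_ hlevels
  gcongr with x _ x _
  · exact fun h => half_le_transitionFamily h.1 h.2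
  · exact fun h => ⟨none, by linarith [transitionFamily_none (c := c) (f := f x) (i := i)]⟩

/-- The transition function varies only where `u_k` and `|f_k|` are bounded below, for the index `k`
that is active in the minimum. -/
theorem exists_min_measure_le_lintegral_energyDensity [Nontrivial E] (hp : 1 ≤ p) (hM : 0 < M)
    (hc : 0 < c) (hΩo : IsOpen Ω) (hΩ : μ Ω ≠ ⊤)
    (hiso : HasRelIsoperimetricInequality μ Ω) :
    ∃ C : NNReal, ∀ u f : E → ι → ℝ, ContinuousOn u Ω → ContDiffOn ℝ 1 f Ω →
      (∀ x ∈ Ω, 0 ≤ u x) → (∀ x ∈ Ω, (∀ j, -c ≤ f x j) → ∀ i, c ≤ u x i ∨ c ≤ f x i) →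
      ∀ i, min (μ {x ∈ Ω | (∀ j, -(c / 2) ≤ f x j) ∧ c ≤ f x i}) (μ {x ∈ Ω | f x i ≤ c / 2}) ≤
        C * ∫⁻ x in Ω, ENNReal.ofReal (energyDensity p M u f x) ∂μ := by
  obtain ⟨C, hC⟩ := hiso.exists_min_measure_le hΩo hΩ
  obtain ⟨K, hK⟩ := exists_setLIntegral_enorm_fderiv_add_one_le (ι := ι) μ hp hM
    (show 0 < c / 4 by positivity)
  have hr : (c / 2).toNNReal ≠ 0 := by simpa using hc
  refine ⟨(c / 2).toNNReal⁻¹ * (C * (Fintype.card (Option ι) * K)), fun u f hu hf hu0 hsep i => ?_⟩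
  rw [continuousOn_pi] at hu
  rw [contDiffOn_pi] at hf
  set R := ∫⁻ x in Ω, ENNReal.ofReal (energyDensity p M u f x) ∂μ
  let W : ι → Set E := fun k => Ω ∩ (fun x => min (u x k) |f x k|) ⁻¹' Set.Ioi (c / 4)
  have hWΩ : ∀ k, W k ⊆ Ω := fun k => Set.inter_subset_left
  have hWo : ∀ k, IsOpen (W k) := fun k =>
    ((hu k).inf (hf k).continuousOn.abs).isOpen_inter_preimage hΩo isOpen_Ioi
  have hWR : ∀ k, ∫⁻ x in W k, (‖fderiv ℝ (fun y => f y k) x‖ₑ + 1) ∂μH[finrank ℝ E] ≤ K * R :=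
    fun k => (hK u f k (W k) (hWo k).measurableSet fun x ⟨hx, hxk⟩ =>
      ⟨hu0 x hx, le_min_iff.1 (le_of_lt hxk)⟩).trans
      (by gcongr; exact lintegral_mono_set (hWΩ k))
  rw [ENNReal.coe_mul, ENNReal.coe_inv hr, mul_assoc,
    ← ENNReal.mul_le_iff_le_inv (by simpa using hr) ENNReal.coe_ne_top]
  calc ENNReal.ofReal (c / 2) *
        min (μ {x ∈ Ω | (∀ j, -(c / 2) ≤ f x j) ∧ c ≤ f x i}) (μ {x ∈ Ω | f x i ≤ c / 2})
      ≤ C * ∑ k : Option ι, ∫⁻ x in W (k.getD i),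
          (‖fderiv ℝ (fun y => f y (k.getD i)) x‖ₑ + 1) ∂μH[finrank ℝ E] :=
        ofReal_mul_min_measure_gap_le hC hΩo hf hsep hWo hWΩ
          (fun x hx k huk hfk => ⟨hx, lt_min huk hfk⟩) i
    _ ≤ C * ∑ _k : Option ι, K * R := by
        gcongr with k
        exact hWR (k.getD i)
    _ = (C * (Fintype.card (Option ι) * K) : NNReal) * R := by
        rw [Finset.sum_const, Finset.card_univ, nsmul_eq_mul]
        push_cast
        ring

end Transition

/-! ### The alternative -/

section Pointwise

variable {X ι : Type*} [Fintype ι] {p M c η C : ℝ}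

theorem min_mul_sum_rpow_le_weightedDensity {u f : ι → ℝ} (hu : ∀ i, c ≤ u i) :
    min c M * ∑ i, |f i| ^ p ≤ weightedDensity p M u f := by
  rw [Finset.mul_sum]
  exact Finset.sum_le_sum fun i _ =>
    mul_le_mul_of_nonneg_right (min_le_min_right M (hu i)) (by positivity)

/-- Where the density is small and `f` is in none of the sets `{f ≥ -c / 2, f_i ≥ c}`, every `u_i`
is at least `c`, so that the weights in the density are harmless. -/
theorem IsFacetSeparated.sum_rpow_le_inv_mul_weightedDensity (hM : 0 < M) (hc : 0 < c)
    {u f : ι → ℝ} (h : IsFacetSeparated p M c η C u f) (hη : weightedDensity p M u f < η)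
    (hf : ∀ i, ¬((∀ j, -(c / 2) ≤ f j) ∧ c ≤ f i)) :
    ∑ i, |f i| ^ p ≤ (min c M)⁻¹ * weightedDensity p M u f :=
  (le_inv_mul_iff₀ (lt_min hc hM)).2 <| min_mul_sum_rpow_le_weightedDensity fun i =>
    ((h.gap hη i).resolve_right fun hfi => hf i ⟨h.neg_half_le hη, hfi⟩).1

theorem IsFacetSeparated.ofReal_sum_rpow_le (hM : 0 < M) (hc : 0 < c) (hC : 0 ≤ C) {u f : X → ι → ℝ}
    {x : X} (h : IsFacetSeparated p M c η C (u x) (f x)) :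
    ENNReal.ofReal (∑ i, |f x i| ^ p) ≤
      ENNReal.ofReal (C + (min c M)⁻¹) * ENNReal.ofReal (weightedDensity p M (u x) (f x)) +
        ({y | η ≤ weightedDensity p M (u y) (f y)} ∪
          ⋃ i, {y | (∀ j, -(c / 2) ≤ f y j) ∧ c ≤ f y i}).indicator
            (fun _ => ENNReal.ofReal C) x := by
  have : 0 < min c M := lt_min hc hM
  set H : Set X := {y | η ≤ weightedDensity p M (u y) (f y)} ∪
    ⋃ i, {y | (∀ j, -(c / 2) ≤ f y j) ∧ c ≤ f y i}
  set w := weightedDensity p M (u x) (f x)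
  have hw0 : 0 ≤ w := weightedDensity_nonneg hM.le h.nonneg
  rw [← ENNReal.ofReal_mul (by positivity)]
  by_cases hxH : x ∈ H
  · have hu0 : 0 ≤ ∑ i, |u x i| ^ p := by positivity
    rw [Set.indicator_of_mem hxH, ← ENNReal.ofReal_add (by positivity) hC]
    refine ENNReal.ofReal_le_ofReal ?_
    calc ∑ i, |f x i| ^ p ≤ C * (1 + w) := by linarith [h.sum_rpow_le]
      _ ≤ C * (1 + w) + (min c M)⁻¹ * w := le_add_of_nonneg_right (by positivity)
      _ = (C + (min c M)⁻¹) * w + C := by ring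
  · rw [Set.indicator_of_notMem hxH, add_zero]
    simp only [H, Set.mem_union, Set.mem_iUnion, not_or, not_exists] at hxH
    refine ENNReal.ofReal_le_ofReal ?_
    calc ∑ i, |f x i| ^ p ≤ (min c M)⁻¹ * w :=
          h.sum_rpow_le_inv_mul_weightedDensity hM hc (not_le.1 hxH.1) hxH.2
      _ ≤ (C + (min c M)⁻¹) * w := by gcongr; exact le_add_of_nonneg_left hC

end Pointwise

section Alternative

variable {X ι : Type*} [MeasurableSpace X] {ν : Measure X}

theorem measure_setOf_le_le_ofReal_inv_mul_lintegral {g : X → ℝ} (hg : AEMeasurable g ν) {s : ℝ}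
    (hs : 0 < s) : ν {x | s ≤ g x} ≤ ENNReal.ofReal s⁻¹ * ∫⁻ x, ENNReal.ofReal (g x) ∂ν :=
  calc ν {x | s ≤ g x} ≤ ν {x | ENNReal.ofReal s ≤ ENNReal.ofReal (g x)} :=
        measure_mono fun _ => ENNReal.ofReal_le_ofReal
    _ ≤ (∫⁻ x, ENNReal.ofReal (g x) ∂ν) / ENNReal.ofReal s :=
        meas_ge_le_lintegral_div hg.ennreal_ofReal (ENNReal.ofReal_pos.2 hs).ne'
          ENNReal.ofReal_ne_top
    _ = ENNReal.ofReal s⁻¹ * ∫⁻ x, ENNReal.ofReal (g x) ∂ν := by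
        rw [ENNReal.div_eq_inv_mul, ENNReal.ofReal_inv_of_pos hs]

theorem measure_le_of_imp_le_or_le_or_mem {g : X → ℝ} (hg : AEMeasurable g ν) {s t : ℝ}
    (hs : 0 < s) (ht : 0 < t) {S T : Set X} (hST : ∀ᵐ x ∂ν, x ∈ S → s ≤ g x ∨ t ≤ g x ∨ x ∈ T) :
    ν S ≤ (ENNReal.ofReal s⁻¹ + ENNReal.ofReal t⁻¹) * ∫⁻ x, ENNReal.ofReal (g x) ∂ν + ν T :=
  calc ν S ≤ ν ({x | s ≤ g x} ∪ ({x | t ≤ g x} ∪ T)) := measure_mono_ae hST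
    _ ≤ ν {x | s ≤ g x} + (ν {x | t ≤ g x} + ν T) :=
        (measure_union_le _ _).trans (by gcongr; exact measure_union_le _ _)
    _ ≤ ENNReal.ofReal s⁻¹ * ∫⁻ x, ENNReal.ofReal (g x) ∂ν +
          (ENNReal.ofReal t⁻¹ * ∫⁻ x, ENNReal.ofReal (g x) ∂ν + ν T) := by
        gcongr
        exacts [measure_setOf_le_le_ofReal_inv_mul_lintegral hg hs,
          measure_setOf_le_le_ofReal_inv_mul_lintegral hg ht]
    _ = _ := by ring

theorem tendstoInMeasure_zero_of_measure_le_mul {g : ℕ → X → ℝ} {r : ℕ → ENNReal}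
    (hr : Tendsto r atTop (nhds 0)) {L : ℝ → ENNReal} (hL : ∀ δ, L δ ≠ ⊤)
    (hg : ∀ n, ∀ δ > 0, ν {x | δ ≤ |g n x|} ≤ L δ * r n) :
    TendstoInMeasure ν g atTop fun _ => 0 := by
  refine tendstoInMeasure_iff_norm.2 fun δ hδ => ?_
  have hlim : Tendsto (fun n => L δ * r n) atTop (nhds 0) := by
    simpa using ENNReal.Tendsto.const_mul hr (Or.inr (hL δ))
  refine tendsto_of_tendsto_of_tendsto_of_le_of_le tendsto_const_nhds hlim (fun _ => zero_le)
    fun n => ?_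
  simpa using hg n δ hδ

variable [Fintype ι] {p M c η C : ℝ} {u f : X → ι → ℝ}

theorem lintegral_sum_rpow_add_sum_rpow_le (hM : 0 ≤ M) (hC : 0 ≤ C)
    (hsep : ∀ᵐ x ∂ν, IsFacetSeparated p M c η C (u x) (f x)) :
    ∫⁻ x, ENNReal.ofReal (∑ i, |u x i| ^ p + ∑ i, |f x i| ^ p) ∂ν ≤ ENNReal.ofReal C *
      (ν Set.univ + ∫⁻ x, ENNReal.ofReal (weightedDensity p M (u x) (f x)) ∂ν) :=
  calc ∫⁻ x, ENNReal.ofReal (∑ i, |u x i| ^ p + ∑ i, |f x i| ^ p) ∂ν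
      ≤ ∫⁻ x, ENNReal.ofReal C * (1 + ENNReal.ofReal (weightedDensity p M (u x) (f x))) ∂ν := by
        refine lintegral_mono_ae (hsep.mono fun x hx => ?_)
        rw [← ENNReal.ofReal_one, ← ENNReal.ofReal_add zero_le_one
          (weightedDensity_nonneg hM hx.nonneg), ← ENNReal.ofReal_mul hC]
        exact ENNReal.ofReal_le_ofReal hx.sum_rpow_le
    _ = _ := by
        rw [lintegral_const_mul' _ _ ENNReal.ofReal_ne_top, lintegral_add_left measurable_const,
          lintegral_one]

theorem measure_setOf_le_abs_left_le (hp : 0 ≤ p) (hM : 0 < M) (hc : 0 < c) (hη : 0 < η)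
    (hw : AEMeasurable (fun x => weightedDensity p M (u x) (f x)) ν)
    (hsep : ∀ᵐ x ∂ν, IsFacetSeparated p M c η C (u x) (f x)) (i : ι) {δ : ℝ} (hδ : 0 < δ) :
    ν {x | δ ≤ |u x i|} ≤ (ENNReal.ofReal η⁻¹ + ENNReal.ofReal (min δ M * c ^ p)⁻¹) *
      ∫⁻ x, ENNReal.ofReal (weightedDensity p M (u x) (f x)) ∂ν + ν {x | f x i ≤ c / 2} := by
  have : 0 < min δ M := lt_min hδ hM
  refine measure_le_of_imp_le_or_le_or_mem hw hη (by positivity) (hsep.mono fun x hx hδu => ?_)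
  refine (le_or_gt η _).imp_right fun hlt => (hx.gap hlt i).symm.imp (fun hfi => ?_) And.right
  rw [Set.mem_ofPred_eq, abs_of_nonneg (hx.nonneg i)] at hδu
  exact min_mul_rpow_le_weightedDensity hp hM.le hx.nonneg hc.le hδu (hfi.trans (le_abs_self _))

theorem measure_setOf_le_abs_right_le (hp : 0 ≤ p) (hM : 0 < M) (hc : 0 < c) (hη : 0 < η)
    (hw : AEMeasurable (fun x => weightedDensity p M (u x) (f x)) ν)
    (hsep : ∀ᵐ x ∂ν, IsFacetSeparated p M c η C (u x) (f x)) (i : ι) {δ : ℝ} (hδ : 0 < δ) :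
    ν {x | δ ≤ |f x i|} ≤ (ENNReal.ofReal η⁻¹ + ENNReal.ofReal (min c M * δ ^ p)⁻¹) *
        ∫⁻ x, ENNReal.ofReal (weightedDensity p M (u x) (f x)) ∂ν +
      ν {x | (∀ j, -(c / 2) ≤ f x j) ∧ c ≤ f x i} := by
  have : 0 < min c M := lt_min hc hM
  refine measure_le_of_imp_le_or_le_or_mem hw hη (by positivity) (hsep.mono fun x hx hδf => ?_)
  refine (le_or_gt η _).imp_right fun hlt => (hx.gap hlt i).imp (fun hui => ?_) fun hfi =>
    ⟨hx.neg_half_le hlt, hfi⟩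
  exact min_mul_rpow_le_weightedDensity hp hM.le hx.nonneg hδ.le hui.1 hδf

theorem lintegral_sum_rpow_le (hM : 0 < M) (hc : 0 < c) (hη : 0 < η) (hC : 0 ≤ C)
    (hw : AEMeasurable (fun x => weightedDensity p M (u x) (f x)) ν)
    (hsep : ∀ᵐ x ∂ν, IsFacetSeparated p M c η C (u x) (f x)) :
    ∫⁻ x, ENNReal.ofReal (∑ i, |f x i| ^ p) ∂ν ≤
      (ENNReal.ofReal (C + (min c M)⁻¹) + ENNReal.ofReal C * ENNReal.ofReal η⁻¹) *
          ∫⁻ x, ENNReal.ofReal (weightedDensity p M (u x) (f x)) ∂ν +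
        ENNReal.ofReal C * ∑ i, ν {x | (∀ j, -(c / 2) ≤ f x j) ∧ c ≤ f x i} := by
  set w : X → ℝ := fun x => weightedDensity p M (u x) (f x)
  set T : ι → Set X := fun i => {x | (∀ j, -(c / 2) ≤ f x j) ∧ c ≤ f x i}
  calc ∫⁻ x, ENNReal.ofReal (∑ i, |f x i| ^ p) ∂ν
      ≤ ∫⁻ x, (ENNReal.ofReal (C + (min c M)⁻¹) * ENNReal.ofReal (w x) +
          ({y | η ≤ w y} ∪ ⋃ i, T i).indicator (fun _ => ENNReal.ofReal C) x) ∂ν :=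
        lintegral_mono_ae (hsep.mono fun x hx => hx.ofReal_sum_rpow_le hM hc hC)
    _ = ENNReal.ofReal (C + (min c M)⁻¹) * ∫⁻ x, ENNReal.ofReal (w x) ∂ν +
          ∫⁻ x, ({y | η ≤ w y} ∪ ⋃ i, T i).indicator (fun _ => ENNReal.ofReal C) x ∂ν := by
        rw [lintegral_add_left' (hw.ennreal_ofReal.const_mul _),
          lintegral_const_mul' _ _ ENNReal.ofReal_ne_top]
    _ ≤ ENNReal.ofReal (C + (min c M)⁻¹) * ∫⁻ x, ENNReal.ofReal (w x) ∂ν +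
          ENNReal.ofReal C * (ENNReal.ofReal η⁻¹ * ∫⁻ x, ENNReal.ofReal (w x) ∂ν +
            ∑ i, ν (T i)) := by
        gcongr
        refine (lintegral_indicator_const_le _ _).trans ?_
        gcongr
        exact (measure_union_le _ _).trans
          (add_le_add (measure_setOf_le_le_ofReal_inv_mul_lintegral hw hη)
            (measure_iUnion_fintype_le _ _))
    _ = _ := by ring

/-- Up to sets of measure `O(r)`, the configuration `(u, f)` is close to a solution of a degenerate
system `u_i = 0` for `i ∈ I`, `f_i = 0` for `i ∉ I`, with `I` nonempty. -/
def IsNearlyDegenerate (ν : Measure X) (L : ℝ → ENNReal) (r : ENNReal) (u f : X → ι → ℝ) : Prop :=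
  ∃ I : Finset ι, I.Nonempty ∧ (∀ i ∈ I, ∀ δ > 0, ν {x | δ ≤ |u x i|} ≤ L δ * r) ∧
    ∀ i ∉ I, ∀ δ > 0, ν {x | δ ≤ |f x i|} ≤ L δ * r

/-- The index set `I` collects the `i` for which `{f ≥ -c / 2, f_i ≥ c}` is large. If it is empty,
the inequality holds outright. -/
theorem exists_lintegral_le_or_isNearlyDegenerate (hp : 0 ≤ p) (hM : 0 < M) (hc : 0 < c)
    (hη : 0 < η) (hC : 0 ≤ C) (C₂ : NNReal) :
    ∃ (K : ENNReal) (L : ℝ → ENNReal), K ≠ ⊤ ∧ (∀ δ, L δ ≠ ⊤) ∧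
      ∀ (u f : X → ι → ℝ) (r : ENNReal),
        AEMeasurable (fun x => weightedDensity p M (u x) (f x)) ν →
        (∀ᵐ x ∂ν, IsFacetSeparated p M c η C (u x) (f x)) →
        ∫⁻ x, ENNReal.ofReal (weightedDensity p M (u x) (f x)) ∂ν ≤ r →
        (∀ i, min (ν {x | (∀ j, -(c / 2) ≤ f x j) ∧ c ≤ f x i}) (ν {x | f x i ≤ c / 2}) ≤
          C₂ * r) →
        ∫⁻ x, ENNReal.ofReal (∑ i, |f x i| ^ p) ∂ν ≤ K * r ∨ IsNearlyDegenerate ν L r u f := by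
  classical
  refine ⟨ENNReal.ofReal (C + (min c M)⁻¹) + ENNReal.ofReal C * ENNReal.ofReal η⁻¹ +
      ENNReal.ofReal C * (Fintype.card ι * C₂),
    fun δ => ENNReal.ofReal η⁻¹ + (ENNReal.ofReal (min δ M * c ^ p)⁻¹ +
      ENNReal.ofReal (min c M * δ ^ p)⁻¹) + C₂, by finiteness, fun δ => by finiteness,
    fun u f r hw hsep hr htrans => ?_⟩
  set T : ι → Set X := fun i => {x | (∀ j, -(c / 2) ≤ f x j) ∧ c ≤ f x i}
  rcases (Finset.univ.filter fun i => C₂ * r < ν (T i)).eq_empty_or_nonempty with hI | hI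
  · left
    have hT : ∀ i, ν (T i) ≤ C₂ * r := by simpa [Finset.filter_eq_empty_iff] using hI
    calc ∫⁻ x, ENNReal.ofReal (∑ i, |f x i| ^ p) ∂ν
        ≤ (ENNReal.ofReal (C + (min c M)⁻¹) + ENNReal.ofReal C * ENNReal.ofReal η⁻¹) * r +
            ENNReal.ofReal C * ∑ _i : ι, C₂ * r := by
          refine (lintegral_sum_rpow_le hM hc hη hC hw hsep).trans ?_
          gcongr with i
          exact hT i
      _ = _ := by
          rw [Finset.sum_const, Finset.card_univ, nsmul_eq_mul]
          ring
  · refine Or.inr ⟨_, hI, fun i hi δ hδ => ?_, fun i hi δ hδ => ?_⟩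
    · have hfi : ν {x | f x i ≤ c / 2} ≤ C₂ * r :=
        (min_le_iff.1 (htrans i)).resolve_left (not_le.2 (Finset.mem_filter.1 hi).2)
      refine (measure_setOf_le_abs_left_le hp hM hc hη hw hsep i hδ).trans
        ((add_le_add (mul_le_mul' ?_ hr) hfi).trans_eq (add_mul _ _ _).symm)
      gcongr
      exact le_self_add
    · have hfi : ν (T i) ≤ C₂ * r := by simpa using hi
      refine (measure_setOf_le_abs_right_le hp hM hc hη hw hsep i hδ).trans
        ((add_le_add (mul_le_mul' ?_ hr) hfi).trans_eq (add_mul _ _ _).symm)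
      gcongr
      exact le_add_self

end Alternative

/-! ### The energy gap -/

section EnergyGap

variable {X ι α : Type*} [MeasurableSpace X] [Fintype ι] {ν : Measure X} {p : ℝ}

/-- Some sequence in the family `(u_a, f_a)` of configurations is bounded in `L^p` and converges in
measure to the solutions of a degenerate system `u_i = 0` for `i ∈ I`, `f_i = 0` for `i ∉ I`, with
`I` nonempty. -/
def HasDegenerateSequence (ν : Measure X) (p : ℝ) (u f : α → X → ι → ℝ) : Prop :=
  ∃ q : ℕ → α,
    (∃ B : ℝ, ∀ n, ∫⁻ x, ENNReal.ofReal (∑ i, |u (q n) x i| ^ p) ∂ν ≤ ENNReal.ofReal B) ∧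
    ∃ I : Finset ι, I.Nonempty ∧
      (∀ i ∈ I, TendstoInMeasure ν (fun n x => u (q n) x i) atTop fun _ => 0) ∧
      ∀ i ∉ I, TendstoInMeasure ν (fun n x => f (q n) x i) atTop fun _ => 0

variable {u f : α → X → ι → ℝ} {r : α → ENNReal} {L : ℝ → ENNReal} {B : ENNReal}

theorem hasDegenerateSequence_of_tendsto (hL : ∀ δ, L δ ≠ ⊤) (hB : B ≠ ⊤) {q : ℕ → α}
    (hq : Tendsto (r ∘ q) atTop (nhds 0))
    (hqB : ∀ n, ∫⁻ x, ENNReal.ofReal (∑ i, |u (q n) x i| ^ p) ∂ν ≤ B)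
    (hdeg : ∀ n, IsNearlyDegenerate ν L (r (q n)) (u (q n)) (f (q n))) :
    HasDegenerateSequence ν p u f := by
  choose I hI hIu hIf using hdeg
  obtain ⟨J, hJ⟩ := Finite.exists_infinite_fiber I
  obtain ⟨φ, hφ, hφJ⟩ := extraction_of_frequently_atTop
    (Nat.frequently_atTop_iff_infinite.2 (Set.infinite_coe_iff.1 hJ))
  have hφ0 : Tendsto (fun n => r (q (φ n))) atTop (nhds 0) := hq.comp hφ.tendsto_atTop
  refine ⟨q ∘ φ, ⟨B.toReal, fun n => (hqB (φ n)).trans_eq (ENNReal.ofReal_toReal hB).symm⟩, J,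
    hφJ 0 ▸ hI _, fun i hi => ?_, fun i hi => ?_⟩
  · exact tendstoInMeasure_zero_of_measure_le_mul hφ0 hL fun n => hIu (φ n) i (hφJ n ▸ hi)
  · exact tendstoInMeasure_zero_of_measure_le_mul hφ0 hL fun n => hIf (φ n) i (hφJ n ▸ hi)

theorem exists_pos_forall_isNearlyDegenerate_imp_le (hL : ∀ δ, L δ ≠ ⊤) (hB : B ≠ ⊤)
    (hLp : ∀ a, ∫⁻ x, ENNReal.ofReal (∑ i, |u a x i| ^ p) ∂ν ≤ B * (1 + r a))
    (hsep : ¬HasDegenerateSequence ν p u f) :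
    ∃ ε : ENNReal, 0 < ε ∧ ε ≠ ⊤ ∧ ∀ a, IsNearlyDegenerate ν L (r a) (u a) (f a) → ε ≤ r a := by
  by_contra! hcon
  obtain ⟨ε, -, hε0, hε⟩ := exists_seq_strictAnti_tendsto' (zero_lt_one (α := ENNReal))
  choose q hdeg hlt using fun n => hcon (ε n) (hε0 n).1 (hε0 n).2.ne_top
  refine hsep (hasDegenerateSequence_of_tendsto hL (B := B * (1 + 1)) (by finiteness)
    (tendsto_of_tendsto_of_tendsto_of_le_of_le tendsto_const_nhds hε (fun _ => zero_le)
      fun n => (hlt n).le) (fun n => ?_) hdeg)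
  exact (hLp _).trans (by gcongr; exact ((hlt n).trans (hε0 n).2).le)

theorem exists_forall_lintegral_sum_rpow_le {K : ENNReal} (hK : K ≠ ⊤) (hL : ∀ δ, L δ ≠ ⊤)
    (hB : B ≠ ⊤) (hLp : ∀ a,
      ∫⁻ x, ENNReal.ofReal (∑ i, |u a x i| ^ p + ∑ i, |f a x i| ^ p) ∂ν ≤ B * (1 + r a))
    (halt : ∀ a, ∫⁻ x, ENNReal.ofReal (∑ i, |f a x i| ^ p) ∂ν ≤ K * r a ∨
      IsNearlyDegenerate ν L (r a) (u a) (f a))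
    (hsep : ¬HasDegenerateSequence ν p u f) :
    ∃ C : ℝ, 0 < C ∧ ∀ a,
      ∫⁻ x, ENNReal.ofReal (∑ i, |f a x i| ^ p) ∂ν ≤ ENNReal.ofReal C * r a := by
  have hsum : ∀ v : ι → ℝ, 0 ≤ ∑ i, |v i| ^ p := fun v => by positivity
  obtain ⟨ε, hε, hε', hgap⟩ := exists_pos_forall_isNearlyDegenerate_imp_le hL hB (fun a =>
    (lintegral_mono fun x => ENNReal.ofReal_le_ofReal
      (le_add_of_nonneg_right (hsum (f a x)))).trans (hLp a)) hsep
  have hC : K + B * (ε⁻¹ + 1) ≠ ⊤ := by finiteness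
  refine ⟨(K + B * (ε⁻¹ + 1)).toReal + 1, by positivity, fun a => ?_⟩
  suffices h : ∫⁻ x, ENNReal.ofReal (∑ i, |f a x i| ^ p) ∂ν ≤ (K + B * (ε⁻¹ + 1)) * r a by
    refine h.trans ?_
    gcongr
    exact (ENNReal.le_ofReal_iff_toReal_le hC (by positivity)).2
      (le_add_of_nonneg_right zero_le_one)
  rcases halt a with h | hdeg
  · exact h.trans (by gcongr; exact le_self_add)
  · have h1 : 1 ≤ ε⁻¹ * r a :=
      (ENNReal.mul_le_iff_le_inv hε.ne' hε').1 (by simpa using hgap a hdeg)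
    calc ∫⁻ x, ENNReal.ofReal (∑ i, |f a x i| ^ p) ∂ν ≤ B * (1 + r a) :=
          (lintegral_mono fun x => ENNReal.ofReal_le_ofReal
            (le_add_of_nonneg_left (hsum (u a x)))).trans (hLp a)
      _ ≤ B * (ε⁻¹ * r a + r a) := by gcongr
      _ = B * (ε⁻¹ + 1) * r a := by ring
      _ ≤ _ := by gcongr; exact le_add_self

end EnergyGap

/-! ### The inequality -/

section Main

variable {E α : Type*} [NormedAddCommGroup E] [NormedSpace ℝ E] [MeasurableSpace E] [BorelSpace E]
  {p M : ℝ}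

theorem continuousOn_weightedDensity {X ι : Type*} [TopologicalSpace X] [Fintype ι] {S : Set X}
    (hp : 0 ≤ p) {u f : X → ι → ℝ} (hu : ContinuousOn u S) (hf : ContinuousOn f S) :
    ContinuousOn (fun x => weightedDensity p M (u x) (f x)) S := by
  rw [continuousOn_pi] at hu hf
  exact continuousOn_finsetSum _ fun i _ => ((hu i).inf continuousOn_const).mul
    ((hf i).abs.rpow_const fun _ _ => Or.inr hp)

theorem poincare_beckner_truncated_uniform_general [FiniteDimensional ℝ E] [Nontrivial E]
    {μ : Measure E} [μ.IsAddHaarMeasure] {N : ℕ} {κ : ℝ} (hp : 1 ≤ p) (hκ : 0 < κ) (hM : 0 < M)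
    {Ω : Set E} (hΩo : IsOpen Ω) (hΩ : μ Ω ≠ ⊤) (hiso : HasRelIsoperimetricInequality μ Ω)
    {A : α → E → Matrix (Fin N) (Fin N) ℝ} {m u f : α → E → Fin N → ℝ}
    (hfdef : ∀ a x, f a x = fComp (A a x) (m a x) (u a x))
    (hadm : ∀ a, ∀ x ∈ Ω, IsAdmissible κ (A a x) (m a x))
    (hu : ∀ a, ContinuousOn (u a) Ω) (hf : ∀ a, ContDiffOn ℝ 1 (f a) Ω)
    (hu0 : ∀ a, ∀ x ∈ Ω, 0 ≤ u a x) (hsep : ¬HasDegenerateSequence (μ.restrict Ω) p u f) :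
    ∃ C : ℝ, 0 < C ∧ ∀ a, ∫⁻ x in Ω, ENNReal.ofReal (∑ i, |f a x i| ^ p) ∂μ ≤
      ENNReal.ofReal C * ∫⁻ x in Ω, ENNReal.ofReal (energyDensity p M (u a) (f a) x) ∂μ := by
  have hp0 : 0 ≤ p := zero_le_one.trans hp
  obtain ⟨c, η, C, hc, hη, hC, hfacet⟩ := exists_isFacetSeparated N hp0 hκ hM
  have hfacetΩ : ∀ a, ∀ x ∈ Ω, IsFacetSeparated p M c η C (u a x) (f a x) := fun a x hx =>
    hfdef a x ▸ hfacet _ _ _ (hadm a x hx) (hu0 a x hx)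
  have hae := fun a => ae_restrict_of_forall_mem (μ := μ) hΩo.measurableSet (hfacetΩ a)
  obtain ⟨C₂, hC₂⟩ := exists_min_measure_le_lintegral_energyDensity (ι := Fin N) μ hp hM hc hΩo hΩ
    hiso
  obtain ⟨K, L, hK, hL, halt⟩ :=
    exists_lintegral_le_or_isNearlyDegenerate (ν := μ.restrict Ω) (ι := Fin N) hp0 hM hc hη hC C₂
  have hw : ∀ a, ∫⁻ x in Ω, ENNReal.ofReal (weightedDensity p M (u a x) (f a x)) ∂μ ≤
      ∫⁻ x in Ω, ENNReal.ofReal (energyDensity p M (u a) (f a) x) ∂μ := fun a =>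
    setLIntegral_mono' hΩo.measurableSet fun x hx =>
      ENNReal.ofReal_le_ofReal (weightedDensity_le_energyDensity hM.le (hu0 a x hx))
  refine exists_forall_lintegral_sum_rpow_le (B := ENNReal.ofReal C * (μ Ω + 1)) hK hL
    (by finiteness) (fun a => ?_) (fun a => halt _ _ _ ?_ (hae a) (hw a) fun i => ?_) hsep
  · refine (lintegral_sum_rpow_add_sum_rpow_le hM.le hC (hae a)).trans ?_
    rw [Measure.restrict_apply_univ, mul_assoc]
    gcongr
    rw [add_one_mul, mul_one_add]
    exact add_le_add le_self_add ((hw a).trans le_add_self)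
  · exact (continuousOn_weightedDensity hp0 (hu a) (hf a).continuousOn).aemeasurable
      hΩo.measurableSet
  · rw [Measure.restrict_apply' hΩo.measurableSet, Measure.restrict_apply' hΩo.measurableSet,
      Set.inter_comm _ Ω, Set.inter_comm _ Ω]
    exact hC₂ _ _ (hu a) (hf a) (hu0 a) (fun x hx => (hfacetΩ a x hx).le_or_le) i

end Main

/-- The uniform truncated Poincaré–Beckner inequality (Theorem 2). Let `Ω ⊂ ℝ^d` be a
bounded, connected, open set admitting the relative isoperimetric inequality, `p ≥ 1`, and
let `𝒜` be a family of `C¹` pairs of coefficients, each admissible with the same constant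
`κ`. Let `M > 0` dominate all components of all the solutions `u_I` of the degenerate
systems, over all pairs in `𝒜`, points of `Ω̄` and index sets `I`. Let `U` be a set of
nonnegative `C¹` functions such that one cannot choose an `L^p`-bounded sequence in `U`,
a sequence of pairs in `𝒜`, and a nonempty index set `I` with `u_{in} → 0` in measure for
`i ∈ I` and `f_{in} → 0` in measure for `i ∉ I`. Then there is `C > 0` with
`∫_Ω Σ_i |f_i|^p ≤ C ∫_Ω Σ_i min(u_i, M) (|f_i|^p + |∇f_i|^p)` for all `u ∈ U` and all
pairs in `𝒜`. -/
theorem poincare_beckner_truncated_uniform {d N : ℕ} (hd : 0 < d) (hN : 0 < N)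
    (p κ : ℝ) (hp : 1 ≤ p) (hκ : 0 < κ)
    (Ω : Set (EuclideanSpace ℝ (Fin d)))
    (hΩo : IsOpen Ω) (hΩb : Bornology.IsBounded Ω) (hΩc : IsConnected Ω)
    (hiso : ∃ c : ℝ, 0 < c ∧ ∀ S : Set (EuclideanSpace ℝ (Fin d)), S ⊆ Ω →
      MeasurableSet S → volume S ≤ volume Ω / 2 →
      ENNReal.ofReal c * volume S ^ (((d : ℝ) - 1) / d) ≤ μH[(d : ℝ) - 1] (Ω ∩ frontier S))
    (𝒜 : Set ((Fin N → Fin N → EuclideanSpace ℝ (Fin d) → ℝ) ×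
      (Fin N → EuclideanSpace ℝ (Fin d) → ℝ)))
    (h𝒜C1 : ∀ Am ∈ 𝒜, (∀ i j, ContDiffOn ℝ 1 (Am.1 i j) (closure Ω)) ∧
      ∀ i, ContDiffOn ℝ 1 (Am.2 i) (closure Ω))
    (h𝒜adm : ∀ Am ∈ 𝒜, ∀ x ∈ closure Ω,
      IsAdmissible κ (Matrix.of fun i j => Am.1 i j x) fun i => Am.2 i x)
    (uI : ((Fin N → Fin N → EuclideanSpace ℝ (Fin d) → ℝ) ×
        (Fin N → EuclideanSpace ℝ (Fin d) → ℝ)) →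
      Finset (Fin N) → EuclideanSpace ℝ (Fin d) → Fin N → ℝ)
    (huI : ∀ Am ∈ 𝒜, ∀ I : Finset (Fin N), ∀ x ∈ closure Ω,
      (∀ i ∈ I, uI Am I x i = 0) ∧
        ∀ j ∉ I, Am.2 j x - ∑ k, Am.1 j k x * uI Am I x k = 0)
    (M : ℝ) (hM0 : 0 < M)
    (hM : ∀ Am ∈ 𝒜, ∀ I : Finset (Fin N), ∀ x ∈ closure Ω, ∀ i, uI Am I x i < M)
    (U : Set (EuclideanSpace ℝ (Fin d) → Fin N → ℝ))
    (hUC1 : ∀ u ∈ U, ∀ i, ContDiffOn ℝ 1 (fun x => u x i) (closure Ω))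
    (hU0 : ∀ u ∈ U, ∀ x ∈ Ω, ∀ i, 0 ≤ u x i)
    (hUsep : ¬ ∃ (useq : ℕ → EuclideanSpace ℝ (Fin d) → Fin N → ℝ)
        (Amseq : ℕ → (Fin N → Fin N → EuclideanSpace ℝ (Fin d) → ℝ) ×
          (Fin N → EuclideanSpace ℝ (Fin d) → ℝ)),
      (∀ n, useq n ∈ U) ∧ (∀ n, Amseq n ∈ 𝒜) ∧
      (∃ B : ℝ, ∀ n,
        ∫⁻ x in Ω, ENNReal.ofReal (∑ i, |useq n x i| ^ p) ≤ ENNReal.ofReal B) ∧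
      ∃ I : Finset (Fin N), I.Nonempty ∧
        (∀ i ∈ I, TendstoInMeasure (volume.restrict Ω)
          (fun n x => useq n x i) atTop fun _ => 0) ∧
        ∀ i ∉ I, TendstoInMeasure (volume.restrict Ω)
          (fun n x => (Amseq n).2 i x - ∑ j, (Amseq n).1 i j x * useq n x j)
          atTop fun _ => 0) :
    ∃ C : ℝ, 0 < C ∧ ∀ u ∈ U, ∀ Am ∈ 𝒜,
      ∫⁻ x in Ω, ENNReal.ofReal (∑ i, |Am.2 i x - ∑ j, Am.1 i j x * u x j| ^ p) ≤
        ENNReal.ofReal C * ∫⁻ x in Ω, ENNReal.ofReal (∑ i, min (u x i) M *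
          (|Am.2 i x - ∑ j, Am.1 i j x * u x j| ^ p +
            ‖gradient (fun y => Am.2 i y - ∑ j, Am.1 i j y * u y j) x‖ ^ p)) := by
  have : Nonempty (Fin d) := ⟨⟨0, hd⟩⟩
  obtain ⟨c, hc, hiso⟩ := hiso
  obtain ⟨C, hC, hle⟩ := poincare_beckner_truncated_uniform_general (α := U × 𝒜) (μ := volume)
    (A := fun a x => Matrix.of fun i j => a.2.1.1 i j x) (m := fun a x i => a.2.1.2 i x)
    (u := fun a => a.1) (f := fun a x i => a.2.1.2 i x - ∑ j, a.2.1.1 i j x * a.1.1 x j)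
    hp hκ hM0 hΩo hΩb.measure_lt_top.ne
    ⟨c, hc, fun S hSΩ hS _ hhalf => by simpa using hiso S hSΩ hS hhalf⟩ (fun _ _ => rfl)
    (fun a x hx => h𝒜adm _ a.2.2 x (subset_closure hx))
    (fun a => continuousOn_pi.2 fun i => ((hUC1 _ a.1.2 i).mono subset_closure).continuousOn)
    (fun a => contDiffOn_pi.2 fun i => (((h𝒜C1 _ a.2.2).2 i).sub (ContDiffOn.sum fun j _ =>
      ((h𝒜C1 _ a.2.2).1 i j).mul (hUC1 _ a.1.2 j))).mono subset_closure)
    (fun a x hx i => hU0 _ a.1.2 x hx i)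
    fun ⟨q, hB, hI⟩ => hUsep ⟨fun n => (q n).1, fun n => (q n).2, fun n => (q n).1.2,
      fun n => (q n).2.2, hB, hI⟩
  refine ⟨C, hC, fun u hu Am hAm => ?_⟩
  simpa only [energyDensity, gradient, LinearIsometryEquiv.norm_map] using
    hle (⟨u, hu⟩, ⟨Am, hAm⟩)
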